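/- arXiv:1908.03847 — 2 statements merged into one kernel-verified Lean document; each statement's English description precedes it below -/
import Mathlib

section
/- Let i ≤ k be positive integers, let A : 𝓢(ℝ^i) → 𝓢'(ℝ^i) be a continuous linear map, and let ℓ : {1,…,i} → {1,…,k} be injective. Then there exists a unique continuous linear map E : 𝓢(ℝ^k) → 𝓢'(ℝ^k) such that for all f₁,…,f_k, g₁,…,g_k ∈ 𝓢(ℝ): E(f₁⊗⋯⊗f_k)(g₁⊗⋯⊗g_k) = A(f_{ℓ(1)}⊗⋯⊗f_{ℓ(i)})(g_{ℓ(1)}⊗⋯⊗g_{ℓ(i)}) · ∏_{m ∉ range(ℓ)} ∫_ℝ f_m(x) g_m(x) dx. (E is the k-particle extension A_{(ℓ(1),…,ℓ(i))}, i.e. the i-particle observable A acting only in the variables with indices ℓ(1),…,ℓ(i).) -/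
/-!
For existence, merge variables `x` in the positions `ℓ(1), …, ℓ(i)` with variables `y` in the
remaining ones and put `E F G = ∫ A (F(·, y)) (G(·, y)) dy`. Since `𝓢` is first countable and
convergence in its strong dual is uniform on bounded sets, `A` is jointly continuous, hence bounded
by a product of Schwartz seminorms; so the integrand is continuous and rapidly decreasing in `y`,
and `E` is bounded by a product of seminorms too.

Uniqueness holds because the span of the pure tensors is dense in `𝓢`. Let `θ` be a tensor
supported in the unit cube centred at `0` with `θ(0) = 1`. As `c → 0`, `θ(c x)² F(x) → F(x)` in
`𝓢`. Rescaled by `1/c`, `θ(c x)² F(x)` becomes `θ G` with `G = θ F(·/c)` supported in the cube.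
The Fourier series of `G` on the cube, multiplied by `θ`, converges to `θ G` in `𝓢`, and its terms
`exp (2πi n·x) θ(x)` are tensors; dilations preserve tensors.
-/

open MeasureTheory SchwartzMap

/-- Distribution-valued operators on `ℝ^n`: continuous linear maps `𝓢(ℝ^n) → 𝓢'(ℝ^n)`. -/
abbrev DVO (n : ℕ) : Type :=
  SchwartzMap (Fin n → ℝ) ℂ →L[ℂ] (SchwartzMap (Fin n → ℝ) ℂ →L[ℂ] ℂ)

/-- `F ∈ 𝓢(ℝ^n)` is the pure tensor `f₁ ⊗ ⋯ ⊗ f_n` of the one-dimensional Schwartz functions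
`f₁, …, f_n`. -/
def IsTensor {n : ℕ} (f : Fin n → SchwartzMap ℝ ℂ) (F : SchwartzMap (Fin n → ℝ) ℂ) : Prop :=
  ∀ x : Fin n → ℝ, F x = ∏ m, f m (x m)

/-- `E` is the `k`-particle extension `A_{(ℓ(1),…,ℓ(i))}` of the `i`-particle operator `A`, acting
only in the variables `ℓ(1), …, ℓ(i)`: on pure tensors,
`E(f₁⊗⋯⊗f_k)(g₁⊗⋯⊗g_k) = A(f_{ℓ(1)}⊗⋯⊗f_{ℓ(i)})(g_{ℓ(1)}⊗⋯⊗g_{ℓ(i)}) ·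
∏_{m ∉ range ℓ} ∫ f_m g_m`. -/
def IsExtension (i k : ℕ) (A : DVO i) (ℓ : Fin i → Fin k) (E : DVO k) : Prop :=
  ∀ (f g : Fin k → SchwartzMap ℝ ℂ)
    (F G : SchwartzMap (Fin k → ℝ) ℂ) (F' G' : SchwartzMap (Fin i → ℝ) ℂ),
    IsTensor f F → IsTensor g G →
    IsTensor (fun a => f (ℓ a)) F' → IsTensor (fun a => g (ℓ a)) G' →
    E F G = A F' G' * ∏ m ∈ Finset.univ \ Finset.image ℓ Finset.univ, ∫ x : ℝ, f m x * g m x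

open Filter Topology
open scoped ContDiff

/-! ### Continuous bilinear maps -/

section Bilinear

variable {𝕜 E F G : Type*} [RCLike 𝕜] [AddCommGroup E] [Module 𝕜 E] [AddCommGroup F] [Module 𝕜 F]
  [NormedAddCommGroup G] [NormedSpace 𝕜 G]

-- Along `(xₙ, yₙ) → (x, y)` the maps `A xₙ` converge uniformly on the bounded set `{yₙ}`.
theorem continuous_uncurry_of_firstCountable [TopologicalSpace E] [FirstCountableTopology E]
    [TopologicalSpace F] [FirstCountableTopology F] [IsTopologicalAddGroup F]
    [ContinuousSMul 𝕜 F] (A : E →L[𝕜] F →L[𝕜] G) :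
    Continuous fun z : E × F => A z.1 z.2 := by
  refine continuous_iff_seqContinuous.2 fun z w hz => ?_
  have hA : Tendsto (fun n => A (z n).1) atTop (𝓝 (A w.1)) :=
    (A.continuous.tendsto _).comp hz.fst_nhds
  have hunif := Metric.tendstoUniformlyOn_iff.1
    ((UniformConvergenceCLM.tendsto_iff_tendstoUniformlyOn (RingHom.id 𝕜) G _).1 hA
      (Set.range fun n => (z n).2) (hz.snd_nhds.isVonNBounded_range 𝕜))
  have hlim : Tendsto (fun n => A w.1 (z n).2) atTop (𝓝 (A w.1 w.2)) :=
    ((A w.1).continuous.tendsto _).comp hz.snd_nhds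
  refine (tendsto_iff_of_dist (tendsto_order.2 ⟨fun a ha => ?_, fun ε hε => ?_⟩)).1 hlim
  · exact .of_forall fun n => ha.trans_le dist_nonneg
  · exact (hunif ε hε).mono fun n hn => hn _ ⟨n, rfl⟩

theorem norm_le_div_mul_of_forall_seminorm_lt (L : E →ₗ[𝕜] G) (p : Seminorm 𝕜 E) {r c : ℝ}
    (hr : 0 < r) (hL : ∀ x, p x < r → ‖L x‖ ≤ c) (x : E) : ‖L x‖ ≤ c / r * p x := by
  have hscale : ∀ t > p x, ‖L x‖ ≤ c / r * t := fun t ht => by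
    have ht0 : 0 < t := (apply_nonneg p x).trans_lt ht
    have h := hL (((r / t : ℝ) : 𝕜) • x) (by
      rw [map_smul_eq_mul, RCLike.norm_ofReal, abs_of_pos (by positivity), div_mul_eq_mul_div,
        div_lt_iff₀ ht0]
      gcongr)
    rw [map_smul, norm_smul, RCLike.norm_ofReal, abs_of_pos (by positivity)] at h
    calc ‖L x‖ = t / r * (r / t * ‖L x‖) := by field_simp
      _ ≤ t / r * c := by gcongr
      _ = c / r * t := by ring
  have hlim : Tendsto (fun t => c / r * t) (𝓝[>] p x) (𝓝 (c / r * p x)) :=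
    (Continuous.tendsto (by fun_prop) _).mono_left nhdsWithin_le_nhds
  exact ge_of_tendsto hlim (eventually_mem_nhdsWithin.mono hscale)

variable {ι κ : Type*} [TopologicalSpace E] {p : SeminormFamily 𝕜 E ι}

theorem continuous_finset_sup_seminorm (hp : WithSeminorms p) (s : Finset ι) :
    Continuous (s.sup p : Seminorm 𝕜 E) :=
  have := hp.topologicalAddGroup
  have := hp.continuousSMul
  Seminorm.continuous' (r := 1) <| (hp.mem_nhds_iff _ _).2
    ⟨s, 1, one_pos, Seminorm.ball_subset_closedBall _ _ _⟩

variable [TopologicalSpace F] {q : SeminormFamily 𝕜 F κ}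

theorem exists_norm_le_mul_of_continuous_uncurry (hp : WithSeminorms p) (hq : WithSeminorms q)
    (B : E →ₗ[𝕜] F →ₗ[𝕜] G) (hB : Continuous fun z : E × F => B z.1 z.2) :
    ∃ (s : Finset ι) (t : Finset κ) (C : ℝ), 0 ≤ C ∧
      ∀ x y, ‖B x y‖ ≤ C * s.sup p x * t.sup q y := by
  have hball : {z : E × F | ‖B z.1 z.2‖ < 1} ∈ 𝓝 (0, 0) :=
    (isOpen_lt (by fun_prop) continuous_const).mem_nhds (by simp)
  obtain ⟨U, hU, V, hV, hUV⟩ := mem_nhds_prod_iff.1 hball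
  obtain ⟨s, r, hr, hsU⟩ := (hp.mem_nhds_iff _ _).1 hU
  obtain ⟨t, r', hr', htV⟩ := (hq.mem_nhds_iff _ _).1 hV
  have hunit : ∀ x y, s.sup p x < r → t.sup q y < r' → ‖B x y‖ ≤ 1 := fun x y hx hy =>
    (hUV (Set.mk_mem_prod (hsU ((Seminorm.mem_ball_zero _).2 hx))
      (htV ((Seminorm.mem_ball_zero _).2 hy)))).le
  refine ⟨s, t, 1 / r / r', by positivity, fun x y => ?_⟩
  calc ‖B x y‖ ≤ (1 / r * s.sup p x) / r' * t.sup q y :=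
        norm_le_div_mul_of_forall_seminorm_lt (B x) _ hr' (fun y hy =>
          norm_le_div_mul_of_forall_seminorm_lt (B.flip y) _ hr (fun x hx => hunit x y hx hy) x) y
    _ = 1 / r / r' * s.sup p x * t.sup q y := by ring

theorem continuousAt_of_norm_le {X G : Type*} [TopologicalSpace X] [NormedAddCommGroup G]
    {b : X → G} {c : X → ℝ} {x : X} (hc : Continuous c) (hx : c x = 0)
    (hbc : ∀ y, ‖b y‖ ≤ c y) : ContinuousAt b x := by
  have hbx : b x = 0 := norm_le_zero_iff.1 ((hbc x).trans_eq hx)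
  rw [ContinuousAt, hbx]
  exact squeeze_zero_norm hbc (hx ▸ hc.tendsto x)

theorem exists_clm_of_norm_le_mul [IsTopologicalAddGroup E] [IsTopologicalAddGroup F]
    [ContinuousConstSMul 𝕜 E] [ContinuousConstSMul 𝕜 F]
    (B : E →ₗ[𝕜] F →ₗ[𝕜] G) (P : Seminorm 𝕜 E) (Q : Seminorm 𝕜 F) (hP : Continuous P)
    (hQ : Continuous Q) (hB : ∀ x y, ‖B x y‖ ≤ P x * Q y) :
    ∃ A : E →L[𝕜] F →L[𝕜] G, ∀ x y, A x y = B x y := by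
  have hleft : ∀ y, ContinuousAt (B · y) 0 := fun y =>
    continuousAt_of_norm_le (hP.mul continuous_const) (by simp) (hB · y)
  have hright : ∀ x, ContinuousAt (B x) 0 := fun x =>
    continuousAt_of_norm_le (continuous_const.mul hQ) (by simp) (hB x)
  have hzero : ContinuousAt (fun z : E × F => B z.1 z.2) (0, 0) :=
    continuousAt_of_norm_le (c := fun z => P z.1 * Q z.2) (by fun_prop) (by simp)
      fun z => hB z.1 z.2
  have hjoint : Continuous fun z : E × F => B z.1 z.2 :=
    continuous_of_continuousAt_zero₂ (LinearMap.toAddMonoidHom'.comp B.toAddMonoidHom)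
      hzero hright hleft
  let A : E →ₗ[𝕜] F →L[𝕜] G :=
    { toFun := fun x => ⟨B x, continuous_of_continuousAt_zero (B x) (hright x)⟩
      map_add' := fun x x' => by ext y; simp
      map_smul' := fun c x => by ext y; simp }
  exact ⟨⟨A, ContinuousLinearMap.continuous_of_continuous_uncurry A hjoint⟩, fun _ _ => rfl⟩

end Bilinear

/-! ### Slices of Schwartz functions on a product -/

section OrderSeminorm

variable {D V : Type*} [NormedAddCommGroup D] [NormedSpace ℝ D] [NormedAddCommGroup V]
  [NormedSpace ℂ V]

/-- The supremum of the Schwartz seminorms of index at most `m`; up to constants it is the norm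
`sup_{n ≤ m.2} sup_x (1 + ‖x‖) ^ m.1 * ‖Dⁿ f x‖`. -/
noncomputable def orderSeminorm (m : ℕ × ℕ) : Seminorm ℂ 𝓢(D, V) :=
  (Finset.Iic m).sup (schwartzSeminormFamily ℂ D V)

theorem continuous_orderSeminorm (m : ℕ × ℕ) :
    Continuous (orderSeminorm m : Seminorm ℂ 𝓢(D, V)) :=
  continuous_finset_sup_seminorm (schwartz_withSeminorms ℂ D V) _

theorem finset_sup_le_orderSeminorm (s : Finset (ℕ × ℕ)) :
    s.sup (schwartzSeminormFamily ℂ D V) ≤ orderSeminorm (s.sup id) :=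
  Finset.sup_mono fun _ hi => Finset.mem_Iic.2 (Finset.le_sup (f := id) hi)

theorem schwartzSeminormFamily_le_orderSeminorm (m : ℕ × ℕ) :
    schwartzSeminormFamily ℂ D V m ≤ orderSeminorm m :=
  Finset.le_sup (Finset.mem_Iic.2 le_rfl)

theorem orderSeminorm_mono {m m' : ℕ × ℕ} (h : m ≤ m') :
    (orderSeminorm m : Seminorm ℂ 𝓢(D, V)) ≤ orderSeminorm m' :=
  Finset.sup_mono (Finset.Iic_subset_Iic.2 h)

theorem one_add_norm_pow_mul_le_orderSeminorm {m : ℕ × ℕ} {n : ℕ} (hn : n ≤ m.2) (f : 𝓢(D, V))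
    (x : D) : (1 + ‖x‖) ^ m.1 * ‖iteratedFDeriv ℝ n f x‖ ≤ 2 ^ m.1 * orderSeminorm m f :=
  one_add_le_sup_seminorm_apply le_rfl hn f x

theorem orderSeminorm_le_of_forall {m : ℕ × ℕ} {f : 𝓢(D, V)} {M : ℝ}
    (hM : ∀ n ≤ m.2, ∀ x, (1 + ‖x‖) ^ m.1 * ‖iteratedFDeriv ℝ n f x‖ ≤ M) :
    orderSeminorm m f ≤ M := by
  have hM0 : 0 ≤ M := le_trans (by positivity) (hM 0 (Nat.zero_le _) 0)
  refine Seminorm.finset_sup_apply_le hM0 fun i hi => ?_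
  obtain ⟨hi₁, hi₂⟩ := Prod.mk_le_mk.1 (Finset.mem_Iic.1 hi)
  refine seminorm_le_bound ℂ _ _ f hM0 fun x => le_trans ?_ (hM i.2 hi₂ x)
  gcongr
  calc ‖x‖ ^ i.1 ≤ (1 + ‖x‖) ^ i.1 := by gcongr; linarith
    _ ≤ (1 + ‖x‖) ^ m.1 := pow_le_pow_right₀ (by linarith [norm_nonneg x]) hi₁

theorem exists_norm_le_mul_orderSeminorm (A : 𝓢(D, V) →L[ℂ] 𝓢(D, V) →L[ℂ] ℂ) :
    ∃ (m : ℕ × ℕ) (C : ℝ), 0 ≤ C ∧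
      ∀ f g, ‖A f g‖ ≤ C * orderSeminorm m f * orderSeminorm m g := by
  have hp := schwartz_withSeminorms ℂ D V
  obtain ⟨s, t, C, hC, hA⟩ := exists_norm_le_mul_of_continuous_uncurry hp hp
    ((ContinuousLinearMap.coeLM ℂ).comp A.toLinearMap) (continuous_uncurry_of_firstCountable A)
  refine ⟨s.sup id ⊔ t.sup id, C, hC, fun f g => (hA f g).trans ?_⟩
  gcongr
  · exact ((finset_sup_le_orderSeminorm s).trans (orderSeminorm_mono le_sup_left)) f
  · exact ((finset_sup_le_orderSeminorm t).trans (orderSeminorm_mono le_sup_right)) g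

end OrderSeminorm

section Slice

variable {X Y V : Type*} [NormedAddCommGroup X] [NormedSpace ℝ X] [NormedAddCommGroup Y]
  [NormedSpace ℝ Y] [NormedAddCommGroup V] [NormedSpace ℂ V]

/-- The slice `x ↦ F (x, y)` of a Schwartz function on a product, as a continuous linear map
in `F`. -/
noncomputable def slice (y : Y) : 𝓢(X × Y, V) →L[ℂ] 𝓢(X, V) :=
  compCLMOfAntilipschitz ℂ (g := fun x : X => (x, y)) (K := 1)
    (by
      have h : (fun x : X => (x, y)) = fun x => ContinuousLinearMap.inl ℝ X Y x + (0, y) := by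
        ext <;> simp
      rw [h]
      fun_prop)
    (Isometry.of_dist_eq fun x x' => by simp [Prod.dist_eq]).antilipschitz

@[simp]
theorem slice_apply (y : Y) (F : 𝓢(X × Y, V)) (x : X) : slice y F x = F (x, y) := rfl

theorem iteratedFDeriv_slice (y : Y) (F : 𝓢(X × Y, V)) (n : ℕ) (x : X) :
    iteratedFDeriv ℝ n (slice y F) x =
      (iteratedFDeriv ℝ n F (x, y)).compContinuousLinearMap
        fun _ => ContinuousLinearMap.inl ℝ X Y := by
  have hcomp : (slice y F : X → V) =
      (fun z => F (z + (0, y))) ∘ ContinuousLinearMap.inl ℝ X Y := by ext; simp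
  have hsmooth : ContDiff ℝ n fun z => F (z + (0, y)) :=
    (F.smooth n).comp (contDiff_id.add contDiff_const)
  rw [hcomp, ContinuousLinearMap.iteratedFDeriv_comp_right _ hsmooth x le_rfl,
    iteratedFDeriv_comp_add_right]
  simp

theorem norm_compContinuousLinearMap_inl_le {n : ℕ} (T : (X × Y) [×n]→L[ℝ] V) :
    ‖T.compContinuousLinearMap fun _ => ContinuousLinearMap.inl ℝ X Y‖ ≤ ‖T‖ := by
  refine (T.norm_compContinuousLinearMap_le _).trans ?_
  exact mul_le_of_le_one_right (norm_nonneg _) <| Finset.prod_le_one (fun _ _ => norm_nonneg _)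
    fun _ _ => ContinuousLinearMap.norm_inl_le_one ℝ X Y

theorem one_add_norm_pow_mul_orderSeminorm_slice_le (N : ℕ) (m : ℕ × ℕ) (F : 𝓢(X × Y, V))
    (y : Y) : (1 + ‖y‖) ^ N * orderSeminorm m (slice y F) ≤
      2 ^ (m.1 + N) * orderSeminorm (m.1 + N, m.2) F := by
  have hy : 0 < (1 + ‖y‖) ^ N := by positivity
  rw [← le_div_iff₀' hy]
  refine orderSeminorm_le_of_forall fun n hn x => (le_div_iff₀' hy).2 ?_
  calc (1 + ‖y‖) ^ N * ((1 + ‖x‖) ^ m.1 * ‖iteratedFDeriv ℝ n (slice y F) x‖)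
      ≤ (1 + ‖(x, y)‖) ^ N * ((1 + ‖(x, y)‖) ^ m.1 * ‖iteratedFDeriv ℝ n F (x, y)‖) := by
        rw [iteratedFDeriv_slice]
        gcongr
        · exact norm_snd_le (x, y)
        · exact norm_fst_le (x, y)
        · exact norm_compContinuousLinearMap_inl_le _
    _ = (1 + ‖(x, y)‖) ^ (m.1 + N) * ‖iteratedFDeriv ℝ n F (x, y)‖ := by ring
    _ ≤ _ := one_add_norm_pow_mul_le_orderSeminorm (m := (m.1 + N, m.2)) hn F (x, y)

-- Mean value inequality for `w ↦ Dⁿ F (x, w)`.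
theorem one_add_norm_pow_mul_norm_iteratedFDeriv_sub_le {m : ℕ × ℕ} {n : ℕ} (hn : n ≤ m.2)
    (F : 𝓢(X × Y, V)) (x : X) (y y' : Y) :
    (1 + ‖x‖) ^ m.1 * ‖iteratedFDeriv ℝ n F (x, y) - iteratedFDeriv ℝ n F (x, y')‖ ≤
      2 ^ m.1 * orderSeminorm (m.1, m.2 + 1) F * ‖y - y'‖ := by
  have hx : 0 < (1 + ‖x‖) ^ m.1 := by positivity
  have hdiff : Differentiable ℝ (iteratedFDeriv ℝ n F) :=
    (F.smooth (n + 1)).differentiable_iteratedFDeriv (by exact_mod_cast n.lt_succ_self)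
  have hderiv : ∀ w : Y, HasFDerivAt (fun w => iteratedFDeriv ℝ n F (x, w))
      ((fderiv ℝ (iteratedFDeriv ℝ n F) (x, w)).comp (.inr ℝ X Y)) w := fun w =>
    (hdiff (x, w)).hasFDerivAt.comp w (hasFDerivAt_prodMk_right x w)
  have hbound : ∀ w : Y, ‖(fderiv ℝ (iteratedFDeriv ℝ n F) (x, w)).comp (.inr ℝ X Y)‖ ≤
      2 ^ m.1 * orderSeminorm (m.1, m.2 + 1) F / (1 + ‖x‖) ^ m.1 := fun w => by
    rw [le_div_iff₀' hx]
    refine le_trans ?_ (one_add_norm_pow_mul_le_orderSeminorm (m := (m.1, m.2 + 1))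
      (Nat.succ_le_succ hn) F (x, w))
    rw [← norm_fderiv_iteratedFDeriv]
    gcongr
    · exact norm_fst_le (x, w)
    · exact (ContinuousLinearMap.opNorm_comp_le _ _).trans
        (mul_le_of_le_one_right (norm_nonneg _) (ContinuousLinearMap.norm_inr_le_one ℝ X Y))
  rw [← le_div_iff₀' hx, mul_div_right_comm]
  exact convex_univ.norm_image_sub_le_of_norm_hasFDerivWithin_le
    (fun w _ => (hderiv w).hasFDerivWithinAt) (fun w _ => hbound w)
    (Set.mem_univ y') (Set.mem_univ y)

theorem orderSeminorm_slice_sub_le (m : ℕ × ℕ) (F : 𝓢(X × Y, V)) (y y' : Y) :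
    orderSeminorm m (slice y F - slice y' F) ≤
      2 ^ m.1 * orderSeminorm (m.1, m.2 + 1) F * ‖y - y'‖ := by
  refine orderSeminorm_le_of_forall fun n hn x => ?_
  have hsub : iteratedFDeriv ℝ n (slice y F - slice y' F : 𝓢(X, V)) x =
      (iteratedFDeriv ℝ n F (x, y) - iteratedFDeriv ℝ n F (x, y')).compContinuousLinearMap
        fun _ => ContinuousLinearMap.inl ℝ X Y := by
    rw [FunLike.coe_sub, iteratedFDeriv_sub_apply ((slice y F).contDiffAt n)
      ((slice y' F).contDiffAt n), iteratedFDeriv_slice, iteratedFDeriv_slice]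
    rfl
  rw [hsub]
  exact (mul_le_mul_of_nonneg_left (norm_compContinuousLinearMap_inl_le _) (by positivity)).trans
    (one_add_norm_pow_mul_norm_iteratedFDeriv_sub_le hn F x y y')

theorem continuous_slice (F : 𝓢(X × Y, V)) : Continuous fun y => slice y F := by
  refine continuous_iff_continuousAt.2 fun y => ?_
  refine ((schwartz_withSeminorms ℂ X V).tendsto_nhds _ _).2 fun i ε hε => ?_
  have hlim : Tendsto (fun y' => 2 ^ i.1 * orderSeminorm (i.1, i.2 + 1) F * ‖y' - y‖) (𝓝 y)
      (𝓝 0) := by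
    simpa using (Continuous.tendsto (by fun_prop) y : Tendsto
      (fun y' => 2 ^ i.1 * orderSeminorm (i.1, i.2 + 1) F * ‖y' - y‖) (𝓝 y) _)
  filter_upwards [hlim.eventually (gt_mem_nhds hε)] with y' hy'
  exact ((schwartzSeminormFamily_le_orderSeminorm i _).trans
    (orderSeminorm_slice_sub_le i F y' y)).trans_lt hy'

-- The slices decay faster than any power of `‖y‖`, and `A` is bounded by a product of seminorms.
theorem exists_norm_slice_slice_le (A : 𝓢(X, V) →L[ℂ] 𝓢(X, V) →L[ℂ] ℂ) (N : ℕ) :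
    ∃ (m : ℕ × ℕ) (C : ℝ), ∀ (F G : 𝓢(X × Y, V)) (y : Y), ‖A (slice y F) (slice y G)‖ ≤
      (1 + ‖y‖) ^ (-(N : ℝ)) * (C * orderSeminorm m F * orderSeminorm m G) := by
  obtain ⟨m, C, hC, hA⟩ := exists_norm_le_mul_orderSeminorm A
  refine ⟨(m.1 + N, m.2), C * 2 ^ (m.1 + N) * 2 ^ m.1, fun F G y => ?_⟩
  have hF := one_add_norm_pow_mul_orderSeminorm_slice_le N m F y
  have hG := one_add_norm_pow_mul_orderSeminorm_slice_le 0 m G y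
  rw [pow_zero, one_mul, add_zero] at hG
  have hmono : orderSeminorm m G ≤ orderSeminorm (m.1 + N, m.2) G :=
    orderSeminorm_mono (Prod.mk_le_mk.2 ⟨Nat.le_add_right _ _, le_rfl⟩) G
  rw [Real.rpow_neg (by positivity), Real.rpow_natCast, ← div_eq_inv_mul,
    le_div_iff₀' (by positivity)]
  calc (1 + ‖y‖) ^ N * ‖A (slice y F) (slice y G)‖
      ≤ (1 + ‖y‖) ^ N * (C * orderSeminorm m (slice y F) * orderSeminorm m (slice y G)) := by
        gcongr
        exact hA _ _
    _ = C * ((1 + ‖y‖) ^ N * orderSeminorm m (slice y F)) * orderSeminorm m (slice y G) := by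
        ring
    _ ≤ C * (2 ^ (m.1 + N) * orderSeminorm (m.1 + N, m.2) F) *
          (2 ^ m.1 * orderSeminorm (m.1 + N, m.2) G) := by
        gcongr
        exact hG.trans (by gcongr)
    _ = _ := by ring

variable [MeasurableSpace Y] [OpensMeasurableSpace Y] {μ : Measure Y}

theorem integrable_slice_slice [μ.HasTemperateGrowth] (A : 𝓢(X, V) →L[ℂ] 𝓢(X, V) →L[ℂ] ℂ)
    (F G : 𝓢(X × Y, V)) : Integrable (fun y => A (slice y F) (slice y G)) μ := by
  obtain ⟨m, C, hA⟩ := exists_norm_slice_slice_le (Y := Y) A μ.integrablePower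
  have hcont : Continuous fun y => A (slice y F) (slice y G) :=
    (continuous_uncurry_of_firstCountable A).comp ((continuous_slice F).prodMk (continuous_slice G))
  exact ((Measure.integrable_pow_neg_integrablePower μ).mul_const _).mono'
    hcont.aestronglyMeasurable (.of_forall (hA F G))

theorem exists_clm_eq_integral_slice [μ.HasTemperateGrowth]
    (A : 𝓢(X, V) →L[ℂ] 𝓢(X, V) →L[ℂ] ℂ) :
    ∃ E : 𝓢(X × Y, V) →L[ℂ] 𝓢(X × Y, V) →L[ℂ] ℂ,
      ∀ F G, E F G = ∫ y, A (slice y F) (slice y G) ∂μ := by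
  obtain ⟨m, C, hA⟩ := exists_norm_slice_slice_le (Y := Y) A μ.integrablePower
  let I : ℝ := ∫ y, (1 + ‖y‖) ^ (-(μ.integrablePower : ℝ)) ∂μ
  let B : 𝓢(X × Y, V) →ₗ[ℂ] 𝓢(X × Y, V) →ₗ[ℂ] ℂ :=
    LinearMap.mk₂ ℂ (fun F G => ∫ y, A (slice y F) (slice y G) ∂μ)
      (fun F F' G => by
        simp only [map_add, add_apply]
        exact integral_add (integrable_slice_slice A F G) (integrable_slice_slice A F' G))
      (fun c F G => by simp only [map_smul, smul_apply, integral_smul])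
      (fun F G G' => by
        simp only [map_add]
        exact integral_add (integrable_slice_slice A F G) (integrable_slice_slice A F G'))
      (fun c F G => by simp only [map_smul, integral_smul])
  have hB : ∀ F G, ‖B F G‖ ≤ (Real.toNNReal (I * C) • orderSeminorm m) F * orderSeminorm m G :=
    fun F G => calc
      ‖B F G‖ ≤ ∫ y, (1 + ‖y‖) ^ (-(μ.integrablePower : ℝ)) *
          (C * orderSeminorm m F * orderSeminorm m G) ∂μ :=
        norm_integral_le_of_norm_le
          ((Measure.integrable_pow_neg_integrablePower μ).mul_const _) (.of_forall (hA F G))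
      _ = I * C * orderSeminorm m F * orderSeminorm m G := by rw [integral_mul_const]; ring
      _ ≤ Real.toNNReal (I * C) * orderSeminorm m F * orderSeminorm m G := by
        gcongr
        exact Real.le_coe_toNNReal _
  exact exists_clm_of_norm_le_mul B _ _ ((continuous_orderSeminorm m).const_smul _)
    (continuous_orderSeminorm m) hB

end Slice

/-! ### Existence -/

section Extension

variable {ι κ : Type*} [Fintype ι] [Fintype κ] [DecidableEq κ] {ℓ : ι → κ}

/-- The indices outside the range of `ℓ`, in the form in which they occur in `IsExtension`. -/
abbrev RangeCompl (ℓ : ι → κ) : Type _ := ↥(Finset.univ \ Finset.image ℓ Finset.univ)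

/-- An injection `ℓ : ι → κ` splits the index set `κ` into `ι` and the complement of its range. -/
noncomputable def splitIndex (hℓ : Function.Injective ℓ) : ι ⊕ RangeCompl ℓ ≃ κ :=
  Equiv.ofBijective (Sum.elim ℓ Subtype.val) <| by
    refine ⟨hℓ.sumElim Subtype.val_injective fun a m h => ?_, fun m => ?_⟩
    · simpa [← h] using m.2
    · by_cases hm : ∃ a, ℓ a = m
      · exact hm.elim fun a ha => ⟨.inl a, ha⟩
      · exact ⟨.inr ⟨m, by simpa using hm⟩, rfl⟩

/-- The point of `ℝ^κ` with coordinates `x` on the range of the injection `ℓ : ι → κ` and `y` on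
its complement, as a continuous linear equivalence in `(x, y)`. -/
noncomputable def mergeCoords (hℓ : Function.Injective ℓ) :
    ((ι → ℝ) × (RangeCompl ℓ → ℝ)) ≃L[ℝ] (κ → ℝ) :=
  ((LinearEquiv.sumArrowLequivProdArrow _ _ ℝ ℝ).symm.trans
    (LinearEquiv.funCongrLeft ℝ ℝ (splitIndex hℓ).symm)).toContinuousLinearEquiv

theorem mergeCoords_apply (hℓ : Function.Injective ℓ) (x : ι → ℝ)
    (y : RangeCompl ℓ → ℝ) (s : ι ⊕ RangeCompl ℓ) :
    mergeCoords hℓ (x, y) (splitIndex hℓ s) = Sum.elim x y s := by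
  cases s <;> simp [mergeCoords, LinearEquiv.funCongrLeft_apply, LinearMap.funLeft_apply]

theorem prod_mergeCoords (hℓ : Function.Injective ℓ) (f : κ → ℝ → ℂ) (x : ι → ℝ)
    (y : RangeCompl ℓ → ℝ) :
    ∏ m, f m (mergeCoords hℓ (x, y) m) = (∏ a, f (ℓ a) (x a)) * ∏ m : RangeCompl ℓ, f m (y m) := by
  rw [← (splitIndex hℓ).prod_comp, Fintype.prod_sum_type]
  simp only [mergeCoords_apply, Sum.elim_inl, Sum.elim_inr]
  rfl

theorem slice_comp_mergeCoords (hℓ : Function.Injective ℓ) {f : κ → 𝓢(ℝ, ℂ)}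
    {F : 𝓢(κ → ℝ, ℂ)} {F' : 𝓢(ι → ℝ, ℂ)} (hF : ∀ x, F x = ∏ m, f m (x m))
    (hF' : ∀ x, F' x = ∏ a, f (ℓ a) (x a)) (y : RangeCompl ℓ → ℝ) :
    slice y (compCLMOfContinuousLinearEquiv ℂ (mergeCoords hℓ) F) =
      (∏ m : RangeCompl ℓ, f m (y m)) • F' := by
  ext x
  simp only [slice_apply, compCLMOfContinuousLinearEquiv_apply, Function.comp_apply, smul_apply,
    smul_eq_mul, hF, hF', prod_mergeCoords hℓ fun m => f m]
  ring

theorem exists_isExtension {i k : ℕ} (A : DVO i) {ℓ : Fin i → Fin k}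
    (hℓ : Function.Injective ℓ) : ∃ E : DVO k, IsExtension i k A ℓ E := by
  obtain ⟨E, hE⟩ := exists_clm_eq_integral_slice (Y := RangeCompl ℓ → ℝ) (μ := volume) A
  let T : 𝓢(Fin k → ℝ, ℂ) →L[ℂ] 𝓢((Fin i → ℝ) × _, ℂ) :=
    compCLMOfContinuousLinearEquiv ℂ (mergeCoords hℓ)
  refine ⟨(ContinuousLinearMap.precomp ℂ T).comp (E.comp T),
    fun f g F G F' G' hF hG hF' hG' => ?_⟩
  calc E (T F) (T G)
      = ∫ y : RangeCompl ℓ → ℝ, A F' G' * ∏ m : RangeCompl ℓ, (f m (y m) * g m (y m)) := by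
        rw [hE]
        congr with y
        rw [slice_comp_mergeCoords hℓ hF hF', slice_comp_mergeCoords hℓ hG hG', map_smul,
          map_smul, smul_apply, smul_eq_mul, smul_eq_mul, Finset.prod_mul_distrib]
        ring
    _ = A F' G' * ∏ m ∈ Finset.univ \ Finset.image ℓ Finset.univ, ∫ x, f m x * g m x := by
        rw [integral_const_mul, ← Finset.prod_coe_sort, integral_fintype_prod_volume_eq_prod
          fun (m : RangeCompl ℓ) x => f m x * g m x]

end Extension

/-! ### Multipliers and dilations -/

section Multiplier

variable {D V : Type*} [NormedAddCommGroup D] [NormedSpace ℝ D] [NormedAddCommGroup V]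
  [NormedSpace ℂ V]

theorem orderSeminorm_smulLeftCLM_le {g : D → ℂ} (hg : g.HasTemperateGrowth) {m : ℕ × ℕ} {l : ℕ}
    {K : ℝ} (hK : ∀ j ≤ m.2, ∀ x, ‖iteratedFDeriv ℝ j g x‖ ≤ K * (1 + ‖x‖) ^ l) (F : 𝓢(D, V)) :
    orderSeminorm m (smulLeftCLM V g F) ≤
      2 ^ m.2 * K * (2 ^ (m.1 + l) * orderSeminorm (m.1 + l, m.2) F) := by
  have hK0 : 0 ≤ K := by simpa using (norm_nonneg _).trans (hK 0 (Nat.zero_le _) 0)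
  refine orderSeminorm_le_of_forall fun n hn x => ?_
  have hF : ∀ j, j ≤ n → (1 + ‖x‖) ^ (m.1 + l) * ‖iteratedFDeriv ℝ j F x‖ ≤
      2 ^ (m.1 + l) * orderSeminorm (m.1 + l, m.2) F := fun j hj =>
    one_add_norm_pow_mul_le_orderSeminorm (m := (m.1 + l, m.2)) (hj.trans hn) F x
  rw [smulLeftCLM_apply hg]
  calc (1 + ‖x‖) ^ m.1 * ‖iteratedFDeriv ℝ n (fun y => g y • F y) x‖
      ≤ (1 + ‖x‖) ^ m.1 * ∑ j ∈ Finset.range (n + 1), (n.choose j : ℝ) *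
          ‖iteratedFDeriv ℝ j g x‖ * ‖iteratedFDeriv ℝ (n - j) F x‖ := by
        gcongr
        exact norm_iteratedFDeriv_smul_le hg.1 (F.smooth ⊤) x (by exact_mod_cast le_top)
    _ ≤ ∑ j ∈ Finset.range (n + 1), (n.choose j : ℝ) *
          (K * (2 ^ (m.1 + l) * orderSeminorm (m.1 + l, m.2) F)) := by
        rw [Finset.mul_sum]
        refine Finset.sum_le_sum fun j hj => ?_
        have hjn : j ≤ n := Nat.lt_succ_iff.1 (Finset.mem_range.1 hj)
        calc _ ≤ (1 + ‖x‖) ^ m.1 * ((n.choose j : ℝ) * (K * (1 + ‖x‖) ^ l) *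
              ‖iteratedFDeriv ℝ (n - j) F x‖) := by gcongr; exact hK j (hjn.trans hn) x
          _ = (n.choose j : ℝ) * (K * ((1 + ‖x‖) ^ (m.1 + l) *
              ‖iteratedFDeriv ℝ (n - j) F x‖)) := by ring
          _ ≤ _ := by gcongr (n.choose j : ℝ) * (K * ?_); exact hF _ (Nat.sub_le n j)
    _ = 2 ^ n * K * (2 ^ (m.1 + l) * orderSeminorm (m.1 + l, m.2) F) := by
        rw [← Finset.sum_mul, mul_assoc]
        exact_mod_cast congrArg (· * _) (congrArg Nat.cast (Nat.sum_range_choose n))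
    _ ≤ _ := by gcongr; exact one_le_two

/-- The dilation `F ↦ F (c · )` of Schwartz functions. -/
noncomputable def dilate (c : ℝˣ) : 𝓢(D, V) →L[ℂ] 𝓢(D, V) :=
  compCLMOfContinuousLinearEquiv ℂ (ContinuousLinearEquiv.smulLeft c)

@[simp]
theorem dilate_apply (c : ℝˣ) (F : 𝓢(D, V)) (x : D) : dilate c F x = F ((c : ℝ) • x) := rfl

theorem norm_iteratedFDeriv_le_orderSeminorm {b j : ℕ} (hj : j ≤ b) (F : 𝓢(D, V)) (x : D) :
    ‖iteratedFDeriv ℝ j F x‖ ≤ orderSeminorm (0, b) F := by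
  simpa using one_add_norm_pow_mul_le_orderSeminorm (m := (0, b)) hj F x

-- The factor `|c|` comes from the mean value inequality for `j = 0` and from the chain rule for
-- `j ≥ 1`.
theorem norm_iteratedFDeriv_dilate_sub_const_le (θ : 𝓢(D, V)) {c : ℝˣ} (hc : |(c : ℝ)| ≤ 1)
    {b j : ℕ} (hj : j ≤ b) (x : D) :
    ‖iteratedFDeriv ℝ j (fun y => dilate c θ y - θ 0) x‖ ≤
      |(c : ℝ)| * orderSeminorm (0, b + 1) θ * (1 + ‖x‖) := by
  rcases j.eq_zero_or_pos with rfl | hj0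
  · have hmean : ‖θ ((c : ℝ) • x) - θ 0‖ ≤ orderSeminorm (0, b + 1) θ * ‖(c : ℝ) • x - 0‖ := by
      refine convex_univ.norm_image_sub_le_of_norm_fderiv_le (𝕜 := ℝ)
        (fun y _ => θ.differentiableAt) (fun y _ => ?_) (Set.mem_univ _) (Set.mem_univ _)
      rw [← norm_iteratedFDeriv_one]
      exact norm_iteratedFDeriv_le_orderSeminorm (by lia) θ y
    rw [norm_iteratedFDeriv_zero]
    calc _ ≤ orderSeminorm (0, b + 1) θ * ‖(c : ℝ) • x - 0‖ := hmean
      _ = |(c : ℝ)| * orderSeminorm (0, b + 1) θ * ‖x‖ := by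
        rw [sub_zero, norm_smul, Real.norm_eq_abs]; ring
      _ ≤ _ := by gcongr; linarith
  · have hchain : iteratedFDeriv ℝ j (fun y => dilate c θ y - θ 0) x =
        (c : ℝ) ^ j • iteratedFDeriv ℝ j θ ((c : ℝ) • x) := by
      rw [fun_iteratedFDeriv_sub_apply ((dilate c θ).contDiffAt j) contDiffAt_const,
        iteratedFDeriv_const_of_ne hj0.ne', Pi.zero_apply, sub_zero]
      exact congrFun (iteratedFDeriv_comp_const_smul (c : ℝ) (θ.smooth j)) x
    rw [hchain, norm_smul, norm_pow, Real.norm_eq_abs]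
    calc |(c : ℝ)| ^ j * ‖iteratedFDeriv ℝ j θ ((c : ℝ) • x)‖
        ≤ |(c : ℝ)| * orderSeminorm (0, b + 1) θ := by
          gcongr
          · exact pow_le_of_le_one (abs_nonneg _) hc hj0.ne'
          · exact norm_iteratedFDeriv_le_orderSeminorm (by lia) θ _
      _ ≤ _ := le_mul_of_one_le_right (by positivity) (by linarith [norm_nonneg x])

theorem tendsto_smulLeftCLM_dilate {θ : 𝓢(D, ℂ)} (hθ : θ 0 = 1) {α : Type*} {l : Filter α}
    {c : α → ℝˣ} (hc : Tendsto (fun a => (c a : ℝ)) l (𝓝 0)) (F : 𝓢(D, V)) :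
    Tendsto (fun a => smulLeftCLM V (dilate (c a) θ) F) l (𝓝 F) := by
  rw [(schwartz_withSeminorms ℂ D V).tendsto_nhds]
  intro m ε hε
  have hc0 : Tendsto (fun a => |(c a : ℝ)|) l (𝓝 0) := by simpa using hc.abs
  have hlim : Tendsto (fun a => 2 ^ m.2 * (|(c a : ℝ)| * orderSeminorm (0, m.2 + 1) θ) *
      (2 ^ (m.1 + 1) * orderSeminorm (m.1 + 1, m.2) F)) l (𝓝 0) := by
    simpa using ((hc0.mul_const _).const_mul _).mul_const _
  filter_upwards [hlim.eventually_lt_const hε, hc0.eventually_le_const one_pos] with a ha ha1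
  have hsub : smulLeftCLM V (dilate (c a) θ) F - F =
      smulLeftCLM V (fun y => dilate (c a) θ y - θ 0) F := by
    have hgrowth : (fun y => dilate (c a) θ y - θ 0).HasTemperateGrowth := by fun_prop
    ext x
    rw [sub_apply, smulLeftCLM_apply_apply (by fun_prop), smulLeftCLM_apply_apply hgrowth, hθ,
      sub_smul, one_smul]
  calc schwartzSeminormFamily ℂ D V m (smulLeftCLM V (dilate (c a) θ) F - F)
      ≤ orderSeminorm m (smulLeftCLM V (dilate (c a) θ) F - F) :=
        schwartzSeminormFamily_le_orderSeminorm m _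
    _ ≤ _ := by
        rw [hsub]
        refine orderSeminorm_smulLeftCLM_le (by fun_prop) (fun j hj x => ?_) F
        rw [pow_one]
        exact norm_iteratedFDeriv_dilate_sub_const_le θ ha1 hj x
    _ < ε := ha

end Multiplier

/-! ### Tensors and plane waves -/

section Tensor

variable {ι : Type*} [Fintype ι]

theorem one_add_norm_le_prod_one_add_norm (x : ι → ℝ) : 1 + ‖x‖ ≤ ∏ j, (1 + ‖x j‖) := by
  classical
  have hone : 1 ≤ ∏ j, (1 + ‖x j‖) := Finset.one_le_prod fun j _ => by simp
  rw [← le_sub_iff_add_le', pi_norm_le_iff_of_nonneg (sub_nonneg.2 hone)]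
  intro j
  rw [le_sub_iff_add_le', ← Finset.mul_prod_erase _ _ (Finset.mem_univ j)]
  exact le_mul_of_one_le_right (by positivity) (Finset.one_le_prod fun i _ => by simp)

theorem norm_iteratedFDeriv_comp_eval_le (f : 𝓢(ℝ, ℂ)) (n : ℕ) (j : ι) (x : ι → ℝ) :
    ‖iteratedFDeriv ℝ n (fun y : ι → ℝ => f (y j)) x‖ ≤ ‖iteratedFDeriv ℝ n f (x j)‖ := by
  let coord : (ι → ℝ) →L[ℝ] ℝ := ContinuousLinearMap.proj j
  have hchain := coord.iteratedFDeriv_comp_right (f.smooth n) x le_rfl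
  refine (congrArg norm hchain).trans_le <|
    (ContinuousMultilinearMap.norm_compContinuousLinearMap_le _ _).trans ?_
  refine mul_le_of_le_one_right (norm_nonneg _) <|
    Finset.prod_le_one (fun _ _ => norm_nonneg _) fun _ _ => ?_
  exact ContinuousLinearMap.opNorm_le_bound _ zero_le_one fun y => by
    simpa [coord] using norm_le_pi_norm y j

theorem norm_pow_mul_norm_iteratedFDeriv_prod_le [DecidableEq ι] (f : ι → 𝓢(ℝ, ℂ)) (a n : ℕ)
    (x : ι → ℝ) : ‖x‖ ^ a * ‖iteratedFDeriv ℝ n (fun y : ι → ℝ => ∏ j, f j (y j)) x‖ ≤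
      ∑ p ∈ (Finset.univ : Finset ι).sym n, ((p : Multiset ι).countPerms : ℝ) *
        ∏ j, 2 ^ a * orderSeminorm (a, n) (f j) := by
  have hcount : ∀ (p : Sym ι n) j, (p : Multiset ι).count j ≤ n := fun p j =>
    (Multiset.count_le_card j _).trans_eq p.2
  have hnorm : ‖x‖ ^ a ≤ ∏ j, (1 + ‖x j‖) ^ a := by
    rw [Finset.prod_pow]
    gcongr
    linarith [one_add_norm_le_prod_one_add_norm x]
  have hleibniz : ‖iteratedFDeriv ℝ n (fun y : ι → ℝ => ∏ j, f j (y j)) x‖ ≤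
      ∑ p ∈ (Finset.univ : Finset ι).sym n, ((p : Multiset ι).countPerms : ℝ) *
        ∏ j, ‖iteratedFDeriv ℝ ((p : Multiset ι).count j) (f j) (x j)‖ := by
    refine (norm_iteratedFDeriv_prod_le (N := ∞)
      (fun j _ => ((f j).smooth ⊤).comp (contDiff_apply ℝ ℝ j))
      (by exact_mod_cast le_top)).trans ?_
    gcongr
    exact norm_iteratedFDeriv_comp_eval_le _ _ _ _
  refine (mul_le_mul hnorm hleibniz (norm_nonneg _) (by positivity)).trans ?_
  rw [Finset.mul_sum]
  refine Finset.sum_le_sum fun p _ => ?_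
  rw [mul_left_comm, ← Finset.prod_mul_distrib]
  refine mul_le_mul_of_nonneg_left (Finset.prod_le_prod (fun _ _ => by positivity) fun j _ => ?_)
    (Nat.cast_nonneg _)
  exact one_add_norm_pow_mul_le_orderSeminorm (m := (a, n)) (hcount p j) (f j) (x j)

/-- The pure tensor `f₁ ⊗ ⋯ ⊗ f_k` as a Schwartz function. -/
noncomputable def tensor (f : ι → 𝓢(ℝ, ℂ)) : 𝓢(ι → ℝ, ℂ) where
  toFun x := ∏ j, f j (x j)
  smooth' := contDiff_prod fun j _ => ((f j).smooth ⊤).comp (contDiff_apply ℝ ℝ j)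
  decay' a n := by
    classical
    exact ⟨_, norm_pow_mul_norm_iteratedFDeriv_prod_le f a n⟩

theorem tensor_apply (f : ι → 𝓢(ℝ, ℂ)) (x : ι → ℝ) : tensor f x = ∏ j, f j (x j) := rfl

theorem dilate_tensor (c : ℝˣ) (f : ι → 𝓢(ℝ, ℂ)) :
    dilate c (tensor f) = tensor fun j => dilate c (f j) := rfl

end Tensor

section PlaneWave

variable {D : Type*} [NormedAddCommGroup D] [NormedSpace ℝ D]

theorem iteratedDeriv_cexp_mul_ofReal (c : ℂ) (j : ℕ) :
    iteratedDeriv j (fun t : ℝ => Complex.exp (c * t)) =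
      fun t : ℝ => c ^ j * Complex.exp (c * t) := by
  induction j with
  | zero => simp
  | succ j ih =>
    ext t
    have h : HasDerivAt (fun t : ℝ => Complex.exp (c * t)) (Complex.exp (c * t) * (c * 1)) t :=
      ((hasDerivAt_id t).ofReal_comp.const_mul c).cexp
    rw [iteratedDeriv_succ, ih, (h.const_mul _).deriv]
    ring

/-- The plane wave `x ↦ exp (2πi L x)` with frequency the linear form `L`. -/
noncomputable def planeWave (L : D →L[ℝ] ℝ) (x : D) : ℂ :=
  Complex.exp (2 * Real.pi * Complex.I * L x)

theorem contDiff_planeWave (L : D →L[ℝ] ℝ) : ContDiff ℝ ∞ (planeWave L) :=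
  (contDiff_const.mul (Complex.ofRealCLM.contDiff.comp L.contDiff)).cexp

theorem norm_iteratedFDeriv_planeWave_le (L : D →L[ℝ] ℝ) (j : ℕ) (x : D) :
    ‖iteratedFDeriv ℝ j (planeWave L) x‖ ≤ (2 * Real.pi * ‖L‖) ^ j := by
  have hexp : ContDiff ℝ j fun t : ℝ => Complex.exp (2 * Real.pi * Complex.I * t) :=
    (contDiff_const.mul Complex.ofRealCLM.contDiff).cexp
  have hchain := L.iteratedFDeriv_comp_right hexp x le_rfl
  refine (congrArg norm hchain).trans_le <|
    (ContinuousMultilinearMap.norm_compContinuousLinearMap_le _ _).trans_eq ?_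
  have hunit : ‖Complex.exp (2 * Real.pi * Complex.I * L x)‖ = 1 := by
    rw [mul_right_comm]
    exact_mod_cast Complex.norm_exp_ofReal_mul_I (2 * Real.pi * L x)
  rw [norm_iteratedFDeriv_eq_norm_iteratedDeriv, iteratedDeriv_cexp_mul_ofReal, norm_mul, hunit,
    Finset.prod_const, Finset.card_univ, Fintype.card_fin, mul_one, norm_pow, mul_pow]
  simp [abs_of_pos Real.pi_pos]

theorem hasTemperateGrowth_planeWave (L : D →L[ℝ] ℝ) : (planeWave L).HasTemperateGrowth :=
  ⟨contDiff_planeWave L, fun j => ⟨0, (2 * Real.pi * ‖L‖) ^ j, fun x => by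
    simpa using norm_iteratedFDeriv_planeWave_le L j x⟩⟩

theorem orderSeminorm_smulLeftCLM_planeWave_le (L : D →L[ℝ] ℝ) (m : ℕ × ℕ) (F : 𝓢(D, ℂ)) :
    orderSeminorm m (smulLeftCLM ℂ (planeWave L) F) ≤
      2 ^ m.2 * (1 + 2 * Real.pi * ‖L‖) ^ m.2 * (2 ^ m.1 * orderSeminorm m F) := by
  refine orderSeminorm_smulLeftCLM_le (l := 0) (hasTemperateGrowth_planeWave L)
    (fun j hj x => (norm_iteratedFDeriv_planeWave_le L j x).trans ?_) F
  rw [pow_zero, mul_one]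
  have hL : 0 ≤ 2 * Real.pi * ‖L‖ := by positivity
  calc (2 * Real.pi * ‖L‖) ^ j ≤ (1 + 2 * Real.pi * ‖L‖) ^ j := by gcongr; linarith
    _ ≤ (1 + 2 * Real.pi * ‖L‖) ^ m.2 := pow_le_pow_right₀ (by linarith) hj

end PlaneWave

section Lattice

variable {ι : Type*} [Fintype ι]

/-- The linear form `x ↦ n · x` attached to a lattice point `n`. -/
noncomputable def latticeForm (n : ι → ℤ) : (ι → ℝ) →L[ℝ] ℝ :=
  ∑ j, (n j : ℝ) • ContinuousLinearMap.proj j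

theorem latticeForm_apply (n : ι → ℤ) (x : ι → ℝ) : latticeForm n x = ∑ j, n j * x j := by
  simp [latticeForm]

theorem norm_latticeForm_le (n : ι → ℤ) : ‖latticeForm n‖ ≤ Fintype.card ι * ‖n‖ := by
  refine ContinuousLinearMap.opNorm_le_bound _ (by positivity) fun x => ?_
  rw [latticeForm_apply]
  calc ‖∑ j, n j * x j‖ ≤ ∑ j, ‖n j * x j‖ := norm_sum_le _ _
    _ ≤ ∑ _j : ι, ‖n‖ * ‖x‖ := by
        gcongr with j
        rw [norm_mul, Int.norm_cast_real]
        gcongr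
        · exact norm_le_pi_norm n j
        · exact norm_le_pi_norm x j
    _ = Fintype.card ι * ‖n‖ * ‖x‖ := by
        rw [Finset.sum_const, Finset.card_univ, nsmul_eq_mul, mul_assoc]

theorem planeWave_latticeForm_eq_prod (n : ι → ℤ) (x : ι → ℝ) :
    planeWave (latticeForm n) x =
      ∏ j, planeWave ((n j : ℝ) • ContinuousLinearMap.id ℝ ℝ) (x j) := by
  simp [planeWave, latticeForm_apply, Finset.mul_sum, Complex.exp_sum]

theorem smulLeftCLM_planeWave_tensor (n : ι → ℤ) (f : ι → 𝓢(ℝ, ℂ)) :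
    smulLeftCLM ℂ (planeWave (latticeForm n)) (tensor f) =
      tensor fun j => smulLeftCLM ℂ (planeWave ((n j : ℝ) • ContinuousLinearMap.id ℝ ℝ)) (f j) := by
  ext x
  simp only [smulLeftCLM_apply_apply (hasTemperateGrowth_planeWave _), tensor_apply, smul_eq_mul,
    planeWave_latticeForm_eq_prod, Finset.prod_mul_distrib]

theorem mFourier_coe (n : ι → ℤ) (x : ι → ℝ) :
    UnitAddTorus.mFourier n (fun j => (x j : UnitAddCircle)) = planeWave (latticeForm n) x := by
  rw [planeWave_latticeForm_eq_prod]
  refine Finset.prod_congr rfl fun j _ => ?_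
  rw [fourier_coe_apply, planeWave]
  simp [mul_assoc]

theorem summable_lattice {N : ℕ} (hN : Fintype.card ι < N) :
    Summable fun n : ι → ℤ => ((1 + ‖n‖) ^ N)⁻¹ := by
  let b := Pi.basisFun ℝ ι
  have hrank : Module.finrank ℤ (Submodule.span ℤ (Set.range b)) < N := by
    rwa [ZLattice.rank ℝ, Module.finrank_fintype_fun_eq_card]
  let z : (ι → ℤ) → Submodule.span ℤ (Set.range b) := fun n =>
    ⟨fun j => n j, (b.mem_span_iff_repr_mem ℤ _).2 fun j => ⟨n j, by simp [b]⟩⟩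
  have hz : Function.Injective z := fun n n' h => funext fun j =>
    Int.cast_injective (congrFun (congrArg Subtype.val h) j)
  have hnorm : ∀ n, ‖z n‖ = ‖n‖ := fun n => by
    simp only [z, Submodule.coe_norm, Pi.norm_def, ← Int.norm_cast_real, nnnorm]
  have hsum := (ZLattice.summable_norm_pow_inv _ N hrank).comp_injective hz
  refine hsum.of_norm_bounded_eventually ?_
  filter_upwards [(Set.finite_singleton (0 : ι → ℤ)).compl_mem_cofinite] with n hn
  have : 0 < ‖n‖ := norm_pos_iff.2 hn
  rw [Real.norm_of_nonneg (by positivity), Function.comp_apply, hnorm, inv_pow]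
  gcongr
  linarith

end Lattice

/-! ### Fourier series on the unit cube -/

section Series

variable {D α : Type*} [NormedAddCommGroup D] [NormedSpace ℝ D] {u : α → 𝓢(D, ℂ)} {F : 𝓢(D, ℂ)}

theorem seminorm_le_tsum_of_hasSum (hF : ∀ x, HasSum (fun n => u n x) (F x))
    (hu : ∀ a b, Summable fun n => SchwartzMap.seminorm ℂ a b (u n)) (a b : ℕ) :
    SchwartzMap.seminorm ℂ a b F ≤ ∑' n, SchwartzMap.seminorm ℂ a b (u n) := by
  have hle : ∀ b n x, ‖iteratedFDeriv ℝ b (u n) x‖ ≤ SchwartzMap.seminorm ℂ 0 b (u n) :=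
    fun b n x => norm_iteratedFDeriv_le_seminorm ℂ (u n) b x
  have hfun : (F : D → ℂ) = fun x => ∑' n, u n x := funext fun x => (hF x).tsum_eq.symm
  refine seminorm_le_bound ℂ a b _ (tsum_nonneg fun _ => apply_nonneg _ _) fun x => ?_
  have hn : Summable fun n => ‖iteratedFDeriv ℝ b (u n) x‖ :=
    (hu 0 b).of_nonneg_of_le (fun _ => norm_nonneg _) fun n => hle b n x
  rw [hfun, iteratedFDeriv_tsum_apply (N := ⊤) (f := fun n => u n) (fun n => (u n).smooth ⊤)
    (fun b _ => hu 0 b) (fun b n x _ => hle b n x) le_top]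
  calc ‖x‖ ^ a * ‖∑' n, iteratedFDeriv ℝ b (u n) x‖
      ≤ ‖x‖ ^ a * ∑' n, ‖iteratedFDeriv ℝ b (u n) x‖ := by
        gcongr
        exact norm_tsum_le_tsum_norm hn
    _ = ∑' n, ‖x‖ ^ a * ‖iteratedFDeriv ℝ b (u n) x‖ := tsum_mul_left.symm
    _ ≤ _ := (hn.mul_left _).tsum_le_tsum (fun n => (u n).le_seminorm ℂ a b x) (hu a b)

theorem hasSum_of_summable_seminorm (hF : ∀ x, HasSum (fun n => u n x) (F x))
    (hu : ∀ a b, Summable fun n => SchwartzMap.seminorm ℂ a b (u n)) : HasSum u F := by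
  rw [HasSum, SummationFilter.unconditional_filter, (schwartz_withSeminorms ℂ D ℂ).tendsto_nhds]
  rintro ⟨a, b⟩ ε hε
  have htail := tendsto_tsum_compl_atTop_zero fun n => SchwartzMap.seminorm ℂ a b (u n)
  filter_upwards [htail.eventually (gt_mem_nhds hε)] with s hs
  rw [schwartzSeminormFamily_apply, map_sub_rev]
  refine (seminorm_le_tsum_of_hasSum (u := fun n : {n // n ∉ s} => u n) (fun x => ?_)
    (fun a b => (hu a b).subtype _) a b).trans_lt hs
  rw [sub_apply, sum_apply]
  exact (s.hasSum_compl_iff (f := fun n => u n x)).2 (by simpa using hF x)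

end Series

section FourierSeries

variable {ι : Type*} [Fintype ι]

/-- The integral `∫ exp (-2πi n·x) G x dx` over all of `ℝ^ι`. For `G` supported in the unit cube
centred at `0` this is the `n`-th Fourier coefficient of `G` on that cube. -/
noncomputable def latticeCoeff (G : 𝓢(ι → ℝ, ℂ)) (n : ι → ℤ) : ℂ :=
  ∫ x, planeWave (latticeForm (-n)) x * G x

theorem latticeCoeff_eq_fourier (G : 𝓢(ι → ℝ, ℂ)) (n : ι → ℤ) :
    latticeCoeff G n = FourierTransform.fourier
      (compCLMOfContinuousLinearEquiv ℂ (EuclideanSpace.equiv ι ℝ) G)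
        (WithLp.toLp 2 fun j => (n j : ℝ)) := by
  rw [fourier_coe, Real.fourier_eq', latticeCoeff,
    ← (PiLp.volume_preserving_ofLp ι).integral_comp
      (MeasurableEquiv.toLp 2 (ι → ℝ)).symm.measurableEmbedding]
  refine integral_congr_ae (Eventually.of_forall fun v => ?_)
  simp only [smul_eq_mul]
  congr 1
  simp only [planeWave, latticeForm_apply, PiLp.inner_apply, RCLike.inner_apply, conj_trivial,
    Complex.ofReal_mul, Complex.ofReal_sum, Finset.mul_sum, Finset.sum_mul, Pi.neg_apply]
  exact congrArg Complex.exp (Finset.sum_congr rfl fun j _ => by push_cast; ring)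

theorem exists_one_add_norm_pow_mul_latticeCoeff_le (G : 𝓢(ι → ℝ, ℂ)) (N : ℕ) :
    ∃ C, ∀ n : ι → ℤ, (1 + ‖n‖) ^ N * ‖latticeCoeff G n‖ ≤ C := by
  refine ⟨_, fun n => le_trans ?_ (one_add_norm_pow_mul_le_orderSeminorm (m := (N, 0)) le_rfl
    (FourierTransform.fourier (compCLMOfContinuousLinearEquiv ℂ (EuclideanSpace.equiv ι ℝ) G))
    (WithLp.toLp 2 fun j => (n j : ℝ)))⟩
  rw [latticeCoeff_eq_fourier, norm_iteratedFDeriv_zero]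
  gcongr
  refine (pi_norm_le_iff_of_nonneg (norm_nonneg _)).2 fun j => ?_
  simpa [Int.norm_eq_abs] using PiLp.norm_apply_le (p := 2) (WithLp.toLp 2 fun j => (n j : ℝ)) j

theorem summable_norm_latticeCoeff_mul (G : 𝓢(ι → ℝ, ℂ)) (b : ℕ) :
    Summable fun n => ‖latticeCoeff G n‖ * (1 + ‖n‖) ^ b := by
  obtain ⟨C, hC⟩ := exists_one_add_norm_pow_mul_latticeCoeff_le G (Fintype.card ι + 1 + b)
  refine .of_nonneg_of_le (fun n => by positivity) (fun n => ?_)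
    ((summable_lattice (Nat.lt_add_one (Fintype.card ι))).mul_left C)
  rw [le_mul_inv_iff₀ (by positivity)]
  exact (hC n).trans_eq' (by ring)

theorem half_le_abs_of_coe_eq_coe {a b : ℝ} (hb : |b| ≤ 1 / 2) (hab : a ≠ b)
    (h : (a : UnitAddCircle) = b) : 1 / 2 ≤ |a| := by
  have hzero : ((a - b : ℝ) : UnitAddCircle) = 0 := by rw [AddCircle.coe_sub, h, sub_self]
  obtain ⟨m, hm⟩ := (AddCircle.coe_eq_zero_iff (1 : ℝ)).1 hzero
  rw [zsmul_eq_mul, mul_one] at hm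
  have hm0 : m ≠ 0 := by
    rintro rfl
    exact hab (sub_eq_zero.1 (by simpa using hm.symm))
  have hdist : (1 : ℝ) ≤ |a - b| := by
    rw [← hm]
    exact_mod_cast Int.one_le_abs hm0
  linarith [abs_sub a b]

theorem exists_torus_eq_of_vanishing {G : (ι → ℝ) → ℂ} (hcont : Continuous G)
    (hG : ∀ x, 1 / 2 ≤ ‖x‖ → G x = 0) :
    ∃ h : C(UnitAddTorus ι, ℂ), ∀ x : ι → ℝ, ‖x‖ ≤ 1 / 2 →
      h (fun j => (x j : UnitAddCircle)) = G x := by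
  let K : Set (ι → ℝ) := Metric.closedBall 0 (1 / 2)
  have hK : ∀ x, x ∈ K ↔ ∀ j, |x j| ≤ 1 / 2 := fun x => by
    rw [mem_closedBall_zero_iff, pi_norm_le_iff_of_nonneg (by norm_num)]; rfl
  have : CompactSpace K := isCompact_iff_compactSpace.1 (isCompact_closedBall 0 _)
  let q : C(K, UnitAddTorus ι) :=
    ⟨fun x j => (x.1 j : UnitAddCircle), continuous_pi fun j =>
      (AddCircle.continuous_mk' 1).comp ((continuous_apply j).comp continuous_subtype_val)⟩
  have hsurj : Function.Surjective q := fun y => by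
    have hrep : ∀ j, ∃ t : ℝ, |t| ≤ 1 / 2 ∧ (t : UnitAddCircle) = y j := fun j => by
      obtain ⟨t, ht, hty⟩ := (AddCircle.coe_image_Icc_eq (1 : ℝ) (-(1 / 2))).ge (Set.mem_univ (y j))
      exact ⟨t, abs_le.2 ⟨ht.1, by linarith [ht.2]⟩, hty⟩
    choose t ht hty using hrep
    exact ⟨⟨t, (hK t).2 ht⟩, funext hty⟩
  have hquot : IsQuotientMap q := .of_surjective_continuous hsurj q.continuous
  let g : C(K, ℂ) := ⟨fun x => G x, hcont.comp continuous_subtype_val⟩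
  have hfac : Function.FactorsThrough g q := by
    rintro ⟨a, ha⟩ ⟨b, hb⟩ hab
    rw [hK] at ha hb
    change G a = G b
    by_cases hne : a = b
    · rw [hne]
    obtain ⟨j, hj⟩ := Function.ne_iff.1 hne
    have hj' : (a j : UnitAddCircle) = b j := congrFun hab j
    rw [hG a ((half_le_abs_of_coe_eq_coe (hb j) hj hj').trans (norm_le_pi_norm a j)),
      hG b ((half_le_abs_of_coe_eq_coe (ha j) hj.symm hj'.symm).trans (norm_le_pi_norm b j))]
  exact ⟨hquot.lift g hfac, fun x hx =>
    DFunLike.congr_fun (hquot.lift_comp g hfac) ⟨x, mem_closedBall_zero_iff.2 hx⟩⟩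

theorem mFourierCoeff_eq_latticeCoeff {G : 𝓢(ι → ℝ, ℂ)} (hG : ∀ x, 1 / 2 ≤ ‖x‖ → G x = 0)
    {h : UnitAddTorus ι → ℂ}
    (hh : ∀ x : ι → ℝ, ‖x‖ ≤ 1 / 2 → h (fun j => (x j : UnitAddCircle)) = G x) :
    UnitAddTorus.mFourierCoeff h = latticeCoeff G := by
  ext n
  let Q : Set (ι → ℝ) := {x | ∀ j, x j ∈ Set.Ioc (-(1 / 2) : ℝ) (-(1 / 2) + 1)}
  have hQ : MeasurableSet Q := MeasurableSet.univ_pi' fun _ => measurableSet_Ioc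
  rw [UnitAddTorus.mFourierCoeff_eq_integral h n (fun _ => -(1 / 2)), latticeCoeff,
    ← setIntegral_eq_integral_of_forall_compl_eq_zero (s := Q)
      (f := fun y => planeWave (latticeForm (-n)) y * G y)]
  · refine setIntegral_congr_fun hQ fun y hy => ?_
    have hy' : ‖y‖ ≤ 1 / 2 := (pi_norm_le_iff_of_nonneg (by norm_num)).2 fun j =>
      abs_le.2 ⟨(hy j).1.le, by linarith [(hy j).2]⟩
    simp only [smul_eq_mul]
    rw [mFourier_coe, hh y hy']
  · intro y hy
    obtain ⟨j, hj⟩ := not_forall.1 hy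
    rw [hG y ?_, mul_zero]
    by_contra! hlt
    have hyj := abs_lt.1 ((norm_le_pi_norm y j).trans_lt hlt)
    exact hj ⟨hyj.1, by linarith [hyj.2]⟩

theorem hasSum_latticeCoeff_mul_planeWave {G : 𝓢(ι → ℝ, ℂ)} (hG : ∀ x, 1 / 2 ≤ ‖x‖ → G x = 0)
    {x : ι → ℝ} (hx : ‖x‖ ≤ 1 / 2) :
    HasSum (fun n => latticeCoeff G n * planeWave (latticeForm n) x) (G x) := by
  obtain ⟨h, hh⟩ := exists_torus_eq_of_vanishing G.continuous hG
  have hcoeff : UnitAddTorus.mFourierCoeff h = latticeCoeff G := mFourierCoeff_eq_latticeCoeff hG hh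
  have hsum : Summable (UnitAddTorus.mFourierCoeff h) := by
    rw [hcoeff]
    exact .of_norm (by simpa using summable_norm_latticeCoeff_mul G 0)
  have hseries := UnitAddTorus.hasSum_mFourier_series_apply_of_summable hsum
    fun j => (x j : UnitAddCircle)
  simpa only [hcoeff, hh x hx, mFourier_coe, smul_eq_mul] using hseries

theorem summable_orderSeminorm_latticeCoeff_smul (θ G : 𝓢(ι → ℝ, ℂ)) (m : ℕ × ℕ) :
    Summable fun n =>
      orderSeminorm m (latticeCoeff G n • smulLeftCLM ℂ (planeWave (latticeForm n)) θ) := by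
  let K : ℝ := 1 + 2 * Real.pi * Fintype.card ι
  refine .of_nonneg_of_le (fun n => apply_nonneg _ _) (fun n => ?_)
    ((summable_norm_latticeCoeff_mul G m.2).mul_left
      (2 ^ m.2 * K ^ m.2 * (2 ^ m.1 * orderSeminorm m θ)))
  have hfreq : 1 + 2 * Real.pi * ‖latticeForm n‖ ≤ K * (1 + ‖n‖) := by
    have hform := mul_le_mul_of_nonneg_left (norm_latticeForm_le n) Real.two_pi_pos.le
    have hcard : 0 ≤ 2 * Real.pi * Fintype.card ι := by positivity
    simp only [K]
    nlinarith [norm_nonneg n]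
  rw [map_smul_eq_mul]
  calc _ ≤ ‖latticeCoeff G n‖ * (2 ^ m.2 * (1 + 2 * Real.pi * ‖latticeForm n‖) ^ m.2 *
        (2 ^ m.1 * orderSeminorm m θ)) := by
        gcongr
        exact orderSeminorm_smulLeftCLM_planeWave_le _ m θ
    _ ≤ ‖latticeCoeff G n‖ * (2 ^ m.2 * (K * (1 + ‖n‖)) ^ m.2 *
        (2 ^ m.1 * orderSeminorm m θ)) := by gcongr
    _ = _ := by rw [mul_pow]; ring

-- Cutting off the Fourier series by `θ` makes it converge in `𝓢`, not only on the cube.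
theorem hasSum_latticeCoeff_smul {θ G : 𝓢(ι → ℝ, ℂ)} (hθ : ∀ x, 1 / 2 ≤ ‖x‖ → θ x = 0)
    (hG : ∀ x, 1 / 2 ≤ ‖x‖ → G x = 0) :
    HasSum (fun n => latticeCoeff G n • smulLeftCLM ℂ (planeWave (latticeForm n)) θ)
      (smulLeftCLM ℂ θ G) := by
  refine hasSum_of_summable_seminorm (fun x => ?_) fun a b =>
    (summable_orderSeminorm_latticeCoeff_smul θ G (a, b)).of_nonneg_of_le
      (fun _ => apply_nonneg _ _) fun _ => schwartzSeminormFamily_le_orderSeminorm (a, b) _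
  simp only [smul_apply, smul_eq_mul, smulLeftCLM_apply_apply (hasTemperateGrowth_planeWave _),
    smulLeftCLM_apply_apply θ.hasTemperateGrowth]
  rcases le_total ‖x‖ (1 / 2) with hx | hx
  · simpa only [mul_assoc, mul_comm, mul_left_comm] using
      (hasSum_latticeCoeff_mul_planeWave hG hx).mul_left (θ x)
  · simp [hθ x hx]

end FourierSeries

/-! ### Density of tensors and uniqueness -/

section Density

variable {ι : Type*} [Fintype ι]

theorem exists_schwartzMap_bump {D : Type*} [NormedAddCommGroup D] [NormedSpace ℝ D]
    [FiniteDimensional ℝ D] {r : ℝ} (hr : 0 < r) :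
    ∃ χ : 𝓢(D, ℂ), χ 0 = 1 ∧ ∀ x, r ≤ ‖x‖ → χ x = 0 := by
  let b : ContDiffBump (0 : D) := ⟨r / 2, r, half_pos hr, half_lt_self hr⟩
  have hb : HasCompactSupport fun x => (b x : ℂ) :=
    b.hasCompactSupport.comp_left (g := fun t : ℝ => (t : ℂ)) rfl
  refine ⟨hb.toSchwartzMap (Complex.ofRealCLM.contDiff.comp b.contDiff), ?_, fun x hx => ?_⟩
  · change (b 0 : ℂ) = 1
    rw [b.one_of_mem_closedBall (Metric.mem_closedBall_self b.rIn_pos.le), Complex.ofReal_one]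
  · change (b x : ℂ) = 0
    rw [b.zero_of_le_dist (by rwa [dist_zero_right]), Complex.ofReal_zero]

theorem tensor_eq_zero_of_le_norm {r : ℝ} (hr : 0 < r) {f : ι → 𝓢(ℝ, ℂ)}
    (hf : ∀ j t, r ≤ ‖t‖ → f j t = 0) {x : ι → ℝ} (hx : r ≤ ‖x‖) : tensor f x = 0 := by
  obtain ⟨j, hj⟩ : ∃ j, r ≤ ‖x j‖ := by
    by_contra! hlt
    exact hx.not_gt ((pi_norm_lt_iff hr).2 hlt)
  exact Finset.prod_eq_zero (Finset.mem_univ j) (hf j _ hj)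

/-- The linear span of the pure tensors, i.e. the algebraic tensor product of copies of `𝓢(ℝ)`. -/
noncomputable def tensorSpan (ι : Type*) [Fintype ι] : Submodule ℂ 𝓢(ι → ℝ, ℂ) :=
  Submodule.span ℂ (Set.range tensor)

theorem tensor_mem_tensorSpan (f : ι → 𝓢(ℝ, ℂ)) : tensor f ∈ tensorSpan ι :=
  Submodule.subset_span (Set.mem_range_self f)

theorem dilate_mem_closure_tensorSpan (c : ℝˣ) {F : 𝓢(ι → ℝ, ℂ)}
    (hF : F ∈ closure (tensorSpan ι : Set 𝓢(ι → ℝ, ℂ))) :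
    dilate c F ∈ closure (tensorSpan ι : Set 𝓢(ι → ℝ, ℂ)) := by
  have hle : tensorSpan ι ≤
      (tensorSpan ι).comap (dilate c : 𝓢(ι → ℝ, ℂ) →L[ℂ] 𝓢(ι → ℝ, ℂ)).toLinearMap := by
    refine Submodule.span_le.2 ?_
    rintro _ ⟨f, rfl⟩
    change dilate c (tensor f) ∈ tensorSpan ι
    rw [dilate_tensor]
    exact tensor_mem_tensorSpan _
  exact map_mem_closure (dilate c).continuous hF fun G hG => hle hG

theorem smulLeftCLM_tensor_mem_closure_tensorSpan {f : ι → 𝓢(ℝ, ℂ)}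
    (hf : ∀ j t, 1 / 2 ≤ ‖t‖ → f j t = 0) {G : 𝓢(ι → ℝ, ℂ)}
    (hG : ∀ x, 1 / 2 ≤ ‖x‖ → G x = 0) : smulLeftCLM ℂ (tensor f) G ∈
      closure (tensorSpan ι : Set 𝓢(ι → ℝ, ℂ)) := by
  have hvanish : ∀ x, 1 / 2 ≤ ‖x‖ → tensor f x = 0 := fun x =>
    tensor_eq_zero_of_le_norm one_half_pos hf
  refine mem_closure_of_tendsto (hasSum_latticeCoeff_smul hvanish hG)
    (Eventually.of_forall fun s => Submodule.sum_mem _ fun n _ => Submodule.smul_mem _ _ ?_)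
  rw [smulLeftCLM_planeWave_tensor]
  exact tensor_mem_tensorSpan _

theorem dense_tensorSpan : Dense (tensorSpan ι : Set 𝓢(ι → ℝ, ℂ)) := fun F => by
  obtain ⟨χ, hχ0, hχ⟩ := exists_schwartzMap_bump (D := ℝ) one_half_pos
  let θ : 𝓢(ι → ℝ, ℂ) := tensor fun _ => χ
  let c : ℕ → ℝˣ := fun n => Units.mk0 (1 / ((n : ℝ) + 1)) (by positivity)
  have hθ : ∀ H x, smulLeftCLM ℂ θ H x = θ x * H x := fun H x =>
    smulLeftCLM_apply_apply θ.hasTemperateGrowth H x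
  have hsq0 : smulLeftCLM ℂ θ θ 0 = 1 := by simp [hθ, θ, tensor_apply, hχ0]
  have hc : Tendsto (fun n => (c n : ℝ)) atTop (𝓝 0) := tendsto_one_div_add_atTop_nhds_zero_nat
  refine isClosed_closure.mem_of_tendsto (tendsto_smulLeftCLM_dilate hsq0 hc F)
    (Eventually.of_forall fun n => ?_)
  have hconj : smulLeftCLM ℂ (dilate (c n) (smulLeftCLM ℂ θ θ)) F =
      dilate (c n) (smulLeftCLM ℂ θ (smulLeftCLM ℂ θ (dilate (c n)⁻¹ F))) := by
    ext x
    rw [smulLeftCLM_apply_apply (by fun_prop)]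
    simp only [dilate_apply, hθ, smul_smul, Units.inv_mul, one_smul, smul_eq_mul, mul_assoc]
  rw [hconj]
  refine dilate_mem_closure_tensorSpan _
    (smulLeftCLM_tensor_mem_closure_tensorSpan (fun _ => hχ) fun x hx => ?_)
  rw [hθ, tensor_eq_zero_of_le_norm one_half_pos (fun _ => hχ) hx, zero_mul]

end Density

theorem IsExtension.unique {i k : ℕ} {A : DVO i} {ℓ : Fin i → Fin k} {E E' : DVO k}
    (h : IsExtension i k A ℓ E) (h' : IsExtension i k A ℓ E') : E = E' := by
  refine ContinuousLinearMap.ext_on dense_tensorSpan ?_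
  rintro _ ⟨f, rfl⟩
  refine ContinuousLinearMap.ext_on dense_tensorSpan ?_
  rintro _ ⟨g, rfl⟩
  have hf : IsTensor (fun a => f (ℓ a)) (tensor fun a => f (ℓ a)) := tensor_apply _
  have hg : IsTensor (fun a => g (ℓ a)) (tensor fun a => g (ℓ a)) := tensor_apply _
  rw [h f g _ _ _ _ (tensor_apply f) (tensor_apply g) hf hg,
    h' f g _ _ _ _ (tensor_apply f) (tensor_apply g) hf hg]

/-- Existence and uniqueness of the `k`-particle extension of an `i`-particle distribution-valued
operator `A` in the variables `ℓ(1), …, ℓ(i)`, for an injection `ℓ : {1,…,i} → {1,…,k}`. -/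
theorem exists_unique_extension (i k : ℕ) (hi : 0 < i) (hik : i ≤ k)
    (A : DVO i) (ℓ : Fin i → Fin k) (hℓ : Function.Injective ℓ) :
    ∃! E : DVO k, IsExtension i k A ℓ E := by
  obtain ⟨E, hE⟩ := exists_isExtension A hℓ
  exact ⟨E, hE, fun E' hE' => hE'.unique hE⟩
end

section
/- Let k ∈ ℕ. For every continuous linear map B : 𝓢'(ℝ^k) → 𝓢'(ℝ^k) (strong topologies) there exists a unique continuous linear map B* : 𝓢(ℝ^k) → 𝓢(ℝ^k) such that u(conj(B* g)) = (B u)(conj g) for all g ∈ 𝓢(ℝ^k) and u ∈ 𝓢'(ℝ^k). Moreover the map B ↦ B* is continuous from L(𝓢'(ℝ^k),𝓢'(ℝ^k)) to L(𝓢(ℝ^k),𝓢(ℝ^k)), both spaces carrying the topology of uniform convergence on bounded sets. -/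
/-!
Schwartz space is a Montel space: by Arzelà–Ascoli applied to all derivatives, bounded sets
are relatively compact, the decay at infinity being uniform. A continuous functional on the
strong dual of a locally convex space `X` is bounded on the polar of a bounded set; if `X` is
Montel, the bipolar of that set is compact, so the bipolar theorem in the algebraic dual of `X'`
shows that the functional is evaluation at a point of `X`. Hence every operator `B` on `𝓢'` is the
transpose of an operator on `𝓢`, and conjugating the latter by complex conjugation gives `B*`.
A continuous seminorm `p` on `𝓢` is the supremum of `|u|` over the functionals `u` dominated by `p`,
and these form a bounded subset of `𝓢'`; this yields the continuity of `B*` and of `B ↦ B*`.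
-/

open MeasureTheory SchwartzMap

/-- Tempered distributions on `ℝ^n`: the strong dual of Schwartz space. -/
abbrev TemperedDist (n : ℕ) : Type := SchwartzMap (Fin n → ℝ) ℂ →L[ℂ] ℂ

/-- `fc` is the complex conjugate of the Schwartz function `f`. -/
def IsConjOf {n : ℕ} (f fc : SchwartzMap (Fin n → ℝ) ℂ) : Prop :=
  ∀ x, fc x = (starRingEnd ℂ) (f x)

/-- `Bstar : 𝓢(ℝ^n) → 𝓢(ℝ^n)` is the adjoint of `B : 𝓢'(ℝ^n) → 𝓢'(ℝ^n)`, characterized by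
`u (conj (B* g)) = (B u)(conj g)` for all `g ∈ 𝓢(ℝ^n)` and `u ∈ 𝓢'(ℝ^n)`. -/
def IsAdjointOfDistOp {n : ℕ} (B : TemperedDist n →L[ℂ] TemperedDist n)
    (Bstar : SchwartzMap (Fin n → ℝ) ℂ →L[ℂ] SchwartzMap (Fin n → ℝ) ℂ) : Prop :=
  ∀ (g w gc : SchwartzMap (Fin n → ℝ) ℂ), IsConjOf (Bstar g) w → IsConjOf g gc →
    ∀ u : TemperedDist n, u w = (B u) gc

open Filter Topology Bornology
open scoped ContDiff ComplexOrder

section Bipolar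

variable {𝕜 E F : Type*} [RCLike 𝕜] [AddCommGroup E] [Module 𝕜 E] [AddCommGroup F] [Module 𝕜 F]

lemma exists_dual_norm_le_one_of_absConvex [Module ℝ E] [IsScalarTower ℝ 𝕜 E] [TopologicalSpace E]
    [IsTopologicalAddGroup E] [ContinuousSMul 𝕜 E] [LocallyConvexSpace ℝ E] {C : Set E}
    (hC : AbsConvex 𝕜 C) (hclosed : IsClosed C) (hne : C.Nonempty) {x : E} (hx : x ∉ C) :
    ∃ u : StrongDual 𝕜 E, (∀ y ∈ C, ‖u y‖ ≤ 1) ∧ 1 < ‖u x‖ := by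
  obtain ⟨v, r, hlt, hgt⟩ := RCLike.geometric_hahn_banach_closed_point (𝕜 := 𝕜)
    (convex_RCLike_iff_convex_real.mp hC.2) hclosed hx
  have hr : 0 < r := by simpa using hlt 0 (hC.1.zero_mem hne)
  have hnorm : ∀ y ∈ C, ‖v y‖ ≤ r := fun y hy ↦ by
    obtain ⟨c, hc, hcv⟩ := RCLike.exists_norm_eq_mul_self (v y)
    have h := hlt (c • y) (hC.1.smul_mem hc.le hy)
    rw [map_smul, smul_eq_mul, ← hcv, RCLike.ofReal_re] at h
    exact h.le
  refine ⟨((r⁻¹ : ℝ) : 𝕜) • v, fun y hy ↦ ?_, ?_⟩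
  · simpa [norm_smul, abs_of_pos hr, inv_mul_le_one₀ hr] using hnorm y hy
  · simpa [norm_smul, abs_of_pos hr, one_lt_inv_mul₀ hr] using hgt.trans_le (RCLike.re_le_norm _)

theorem flip_polar_polar_eq_self [Module ℝ E] [IsScalarTower ℝ 𝕜 E] (B : E →ₗ[𝕜] F →ₗ[𝕜] 𝕜)
    {C : Set E} (hC : AbsConvex 𝕜 C) (hclosed : IsClosed (X := WeakBilin B) C)
    (hne : C.Nonempty) : B.flip.polar (B.polar C) = C := by
  refine Set.Subset.antisymm (fun x hx ↦ ?_) (B.subset_bipolar C)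
  by_contra hxC
  obtain ⟨u, hu, hux⟩ := exists_dual_norm_le_one_of_absConvex (E := WeakBilin B) hC hclosed hne hxC
  obtain ⟨y, rfl⟩ := LinearMap.dualEmbedding_surjective B u
  exact hux.not_ge (hx y hu)

end Bipolar

section SeminormPolar

variable {𝕜 X : Type*} [RCLike 𝕜] [AddCommGroup X] [Module 𝕜 X] [TopologicalSpace X]

/-- The polar of the unit ball of a seminorm `p`: the continuous functionals dominated by `p`. -/
def seminormPolar (p : Seminorm 𝕜 X) : Set (StrongDual 𝕜 X) := {u | ∀ x, ‖u x‖ ≤ p x}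

variable [PolynormableSpace 𝕜 X] {p : Seminorm 𝕜 X}

lemma isVonNBounded_seminormPolar (hp : Continuous p) : IsVonNBounded 𝕜 (seminormPolar p) := by
  refine ContinuousLinearMap.isVonNBounded_iff.mpr fun s hs ↦ ?_
  obtain ⟨r, -, hr⟩ :=
    (PolynormableSpace.withSeminorms 𝕜 X).isVonNBounded_iff_seminorm_bounded.mp hs ⟨p, hp⟩
  rw [NormedSpace.isVonNBounded_iff, isBounded_iff_forall_norm_le]
  refine ⟨r, ?_⟩
  rintro _ ⟨u, hu, x, hx, rfl⟩
  exact (hu x).trans (hr x hx).le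

lemma exists_mem_seminormPolar_norm_apply_eq (hp : Continuous p) (x : X) :
    ∃ u ∈ seminormPolar p, ‖u x‖ = p x := by
  rcases eq_or_ne x 0 with rfl | hx
  · exact ⟨0, fun y ↦ by simp, by simp⟩
  let f : Module.Dual 𝕜 (Submodule.span 𝕜 {x}) := (p x : 𝕜) • LinearEquiv.coord 𝕜 X x hx
  have hf (y : Submodule.span 𝕜 {x}) : ‖f y‖ = p y :=
    calc ‖f y‖ = ‖LinearEquiv.coord 𝕜 X x hx y‖ * p x := by
          simp only [f, LinearMap.smul_apply, LinearEquiv.coe_coe, norm_smul, RCLike.norm_ofReal,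
            abs_of_nonneg (apply_nonneg p x), mul_comm]
      _ = p (LinearEquiv.coord 𝕜 X x hx y • x) := (map_smul_eq_mul p _ _).symm
      _ = p y := by rw [LinearEquiv.coord_apply_smul]
  obtain ⟨u, huf, hup⟩ :=
    f.exists_continuous_extension_of_le_seminorm _ hp fun y ↦ (hf y).le
  exact ⟨u, hup, (congrArg norm (huf ⟨x, Submodule.mem_span_singleton_self x⟩)).trans (hf _)⟩

lemma isVonNBounded_polar_polar {s : Set X} (hs : IsVonNBounded 𝕜 s) :
    IsVonNBounded 𝕜 ((topDualPairing 𝕜 X).polar (StrongDual.polar 𝕜 s)) := by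
  refine (PolynormableSpace.withSeminorms 𝕜 X).isVonNBounded_iff_seminorm_bounded.mpr
    fun ⟨p, hp⟩ ↦ ?_
  obtain ⟨r, hr, hrs⟩ :=
    (PolynormableSpace.withSeminorms 𝕜 X).isVonNBounded_iff_seminorm_bounded.mp hs ⟨p, hp⟩
  refine ⟨r + 1, by positivity, fun x hx ↦ ?_⟩
  obtain ⟨u, hu, hux⟩ := exists_mem_seminormPolar_norm_apply_eq hp x
  have hmem : ((r⁻¹ : ℝ) : 𝕜) • u ∈ StrongDual.polar 𝕜 s := by
    refine (StrongDual.mem_polar_iff _ _).mpr fun y hy ↦ ?_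
    simpa [abs_of_pos hr, inv_mul_le_one₀ hr] using (hu y).trans (hrs y hy).le
  have hle : p x ≤ r := by
    simpa [abs_of_pos hr, inv_mul_le_one₀ hr, hux] using hx _ hmem
  exact hle.trans_lt (lt_add_one r)

variable (𝕜 X) in
lemma separatingDual_of_t1Space [T1Space X] : SeparatingDual 𝕜 X where
  exists_ne_zero' x hx := by
    obtain ⟨⟨p, hp⟩, hpx⟩ := (PolynormableSpace.withSeminorms 𝕜 X).separating_of_T1 x hx
    obtain ⟨u, -, hu⟩ := exists_mem_seminormPolar_norm_apply_eq hp x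
    exact ⟨u, norm_ne_zero_iff.mp (hu ▸ hpx)⟩

end SeminormPolar

section Reflexivity

variable {𝕜 X : Type*} [RCLike 𝕜] [AddCommGroup X] [Module 𝕜 X] [TopologicalSpace X]

lemma isClosed_polar_topDualPairing (t : Set (StrongDual 𝕜 X)) :
    IsClosed ((topDualPairing 𝕜 X).polar t) := by
  rw [LinearMap.polar_eq_biInter_preimage]
  exact isClosed_biInter fun u _ ↦ Metric.isClosed_closedBall.preimage u.continuous

lemma exists_isVonNBounded_norm_le_of_mem_polar (φ : StrongDual 𝕜 (StrongDual 𝕜 X)) :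
    ∃ s : Set X, IsVonNBounded 𝕜 s ∧ ∃ c > 0, ∀ u ∈ StrongDual.polar 𝕜 s, ‖φ u‖ ≤ c := by
  have hnhds : φ ⁻¹' Metric.closedBall 0 1 ∈ 𝓝 0 :=
    φ.continuous.continuousAt.preimage_mem_nhds <| by
      simpa only [map_zero] using Metric.closedBall_mem_nhds (0 : 𝕜) one_pos
  obtain ⟨⟨s, r⟩, ⟨hs, hr : 0 < r⟩, hsr⟩ :=
    (ContinuousLinearMap.hasBasis_nhds_zero_of_basis Metric.nhds_basis_closedBall).mem_iff.mp hnhds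
  refine ⟨s, hs, r⁻¹, inv_pos.mpr hr, fun u hu ↦ ?_⟩
  have hmem : (r : 𝕜) • u ∈ φ ⁻¹' Metric.closedBall 0 1 := hsr fun x hx ↦ by
    simpa [abs_of_pos hr] using
      mul_le_of_le_one_right hr.le ((StrongDual.mem_polar_iff _ _).mp hu x hx)
  simpa [abs_of_pos hr, ← le_inv_mul_iff₀ hr] using hmem

/-- Compactness makes the image of `K` in the algebraic dual of `X'` weakly closed, so that the
bipolar theorem applies there. -/
theorem exists_mem_forall_apply_eq_of_isCompact {K : Set X} (hK : IsCompact K)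
    (habs : AbsConvex 𝕜 K) (hne : K.Nonempty) {φ : Module.Dual 𝕜 (StrongDual 𝕜 X)}
    (hφ : ∀ u ∈ StrongDual.polar 𝕜 K, ‖φ u‖ ≤ 1) : ∃ x ∈ K, ∀ u : StrongDual 𝕜 X, u x = φ u := by
  let B : Module.Dual 𝕜 (StrongDual 𝕜 X) →ₗ[𝕜] StrongDual 𝕜 X →ₗ[𝕜] 𝕜 := LinearMap.id
  let eval : X →ₗ[𝕜] WeakBilin B := (topDualPairing 𝕜 X).flip
  have heval : Continuous eval := WeakBilin.continuous_of_continuous_eval B fun u ↦ u.continuous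
  have : T2Space (WeakBilin B) := (WeakBilin.isEmbedding Function.injective_id).t2Space
  have hbalanced : Balanced 𝕜 (eval '' K) := by
    rintro a ha _ ⟨_, ⟨x, hx, rfl⟩, rfl⟩
    exact ⟨a • x, habs.1.smul_mem ha hx, map_smul eval a x⟩
  have hmem : (φ : WeakBilin B) ∈ eval '' K := by
    rw [← flip_polar_polar_eq_self B ⟨hbalanced, habs.2.linear_image eval⟩
      (hK.image heval).isClosed (hne.image eval)]
    exact fun u hu ↦ hφ u fun x hx ↦ hu _ (Set.mem_image_of_mem eval hx)
  obtain ⟨x, hx, hxφ⟩ := hmem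
  exact ⟨x, hx, fun u ↦ LinearMap.congr_fun hxφ u⟩

theorem exists_forall_apply_eq_of_montelSpace [PolynormableSpace 𝕜 X] [MontelSpace 𝕜 X]
    (φ : StrongDual 𝕜 (StrongDual 𝕜 X)) : ∃ x, ∀ u : StrongDual 𝕜 X, u x = φ u := by
  obtain ⟨s, hs, c, hc, hφ⟩ := exists_isVonNBounded_norm_le_of_mem_polar φ
  let K : Set X := (topDualPairing 𝕜 X).polar (StrongDual.polar 𝕜 s)
  have hK : IsCompact K := MontelSpace.isCompact_of_isClosed_of_isVonNBounded 𝕜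
    (isClosed_polar_topDualPairing _) (isVonNBounded_polar_polar hs)
  have hpolar : StrongDual.polar 𝕜 K = StrongDual.polar 𝕜 s :=
    (topDualPairing 𝕜 X).flip.tripolar_eq_polar s
  obtain ⟨x, -, hx⟩ := exists_mem_forall_apply_eq_of_isCompact hK
    (LinearMap.polar_AbsConvex _) (LinearMap.polar_nonempty _ _)
    (φ := ((c⁻¹ : ℝ) : 𝕜) • (φ : Module.Dual 𝕜 (StrongDual 𝕜 X))) fun u hu ↦ by
      simpa [abs_of_pos hc, inv_mul_le_one₀ hc] using hφ u (hpolar ▸ hu)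
  have hc' : (c : 𝕜) ≠ 0 := RCLike.ofReal_ne_zero.mpr hc.ne'
  exact ⟨(c : 𝕜) • x, fun u ↦ by simp [hx, hc']⟩

end Reflexivity

section Predual

variable {𝕜 X Y : Type*} [RCLike 𝕜]
  [AddCommGroup X] [Module 𝕜 X] [TopologicalSpace X]
  [AddCommGroup Y] [Module 𝕜 Y] [TopologicalSpace Y]

lemma isVonNBounded_image_of_forall_apply_eq [PolynormableSpace 𝕜 X]
    [IsTopologicalAddGroup Y] [ContinuousSMul 𝕜 Y]
    (B : StrongDual 𝕜 X →L[𝕜] StrongDual 𝕜 Y) {T : Y →ₗ[𝕜] X}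
    (hT : ∀ (u : StrongDual 𝕜 X) y, u (T y) = B u y) {s : Set Y} (hs : IsVonNBounded 𝕜 s) :
    IsVonNBounded 𝕜 (T '' s) := by
  refine ((PolynormableSpace.withSeminorms 𝕜 X).image_isVonNBounded_iff_seminorm_bounded T).mpr
    fun ⟨p, hp⟩ ↦ ?_
  have hbdd := ContinuousLinearMap.isVonNBounded_image2_apply
    ((isVonNBounded_seminormPolar hp).image B) hs
  rw [NormedSpace.isVonNBounded_iff, isBounded_iff_forall_norm_le] at hbdd
  obtain ⟨r, hr⟩ := hbdd
  refine ⟨max r 0 + 1, by positivity, fun y hy ↦ ?_⟩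
  obtain ⟨u, hu, hup⟩ := exists_mem_seminormPolar_norm_apply_eq hp (T y)
  calc p (T y) = ‖B u y‖ := by rw [← hup, hT]
    _ ≤ r := hr _ ⟨B u, ⟨u, hu, rfl⟩, y, hy, rfl⟩
    _ < max r 0 + 1 := (le_max_left r 0).trans_lt (lt_add_one _)

lemma exists_continuous_seminorm_ball_subset [PolynormableSpace 𝕜 X] {V : Set X}
    (hV : V ∈ 𝓝 0) : ∃ p : Seminorm 𝕜 X, Continuous p ∧ ∃ r > 0, p.ball 0 r ⊆ V := by
  have := (PolynormableSpace.withSeminorms 𝕜 X).topologicalAddGroup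
  obtain ⟨⟨S, r⟩, hr, hSV⟩ :=
    (PolynormableSpace.withSeminorms 𝕜 X).hasBasis_zero_ball.mem_iff.mp hV
  exact ⟨_, Seminorm.continuous_finsetSup fun p _ ↦ p.2, r, hr, hSV⟩

variable [PolynormableSpace 𝕜 X] [T1Space X] [MontelSpace 𝕜 X]
  [IsTopologicalAddGroup Y] [ContinuousSMul 𝕜 Y] [FirstCountableTopology Y]

theorem exists_forall_apply_apply_eq (B : StrongDual 𝕜 X →L[𝕜] StrongDual 𝕜 Y) :
    ∃ T : Y →L[𝕜] X, ∀ (u : StrongDual 𝕜 X) y, u (T y) = B u y := by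
  have := (PolynormableSpace.withSeminorms 𝕜 X).topologicalAddGroup
  have := separatingDual_of_t1Space 𝕜 X
  have heval (y : Y) : ∃ x, ∀ u : StrongDual 𝕜 X, u x = B u y :=
    exists_forall_apply_eq_of_montelSpace
      { toLinearMap := B.toLinearMap₁₂.flip y
        cont := show Continuous fun u ↦ B u y from (continuous_eval_const y).comp B.continuous }
  choose T hT using heval
  let T' : Y →ₗ[𝕜] X :=
    { toFun := T
      map_add' := fun y₁ y₂ ↦ (SeparatingDual.eq_iff_forall_dual_eq (R := 𝕜)).mpr fun u ↦ by
        simp [hT]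
      map_smul' := fun a y ↦ (SeparatingDual.eq_iff_forall_dual_eq (R := 𝕜)).mpr fun u ↦ by
        simp [hT] }
  have hT' (u : StrongDual 𝕜 X) (y) : u (T' y) = B u y := hT y u
  exact ⟨⟨T', T'.continuous_of_locally_bounded fun s hs ↦
    isVonNBounded_image_of_forall_apply_eq B hT' hs⟩, hT'⟩

/-- The predual of an operator `B : X' → Y'`: the operator `Y → X` whose transpose is `B`. -/
noncomputable def predual (B : StrongDual 𝕜 X →L[𝕜] StrongDual 𝕜 Y) : Y →L[𝕜] X :=
  (exists_forall_apply_apply_eq B).choose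

@[simp]
lemma apply_predual (B : StrongDual 𝕜 X →L[𝕜] StrongDual 𝕜 Y) (u : StrongDual 𝕜 X) (y : Y) :
    u (predual B y) = B u y :=
  (exists_forall_apply_apply_eq B).choose_spec u y

lemma eq_predual_iff {B : StrongDual 𝕜 X →L[𝕜] StrongDual 𝕜 Y} {T : Y →L[𝕜] X} :
    T = predual B ↔ ∀ (u : StrongDual 𝕜 X) y, u (T y) = B u y := by
  have := separatingDual_of_t1Space 𝕜 X
  refine ⟨fun h ↦ h ▸ apply_predual B, fun h ↦ ContinuousLinearMap.ext fun y ↦ ?_⟩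
  exact (SeparatingDual.eq_iff_forall_dual_eq (R := 𝕜)).mpr fun u ↦ by rw [h, apply_predual]

variable [IsTopologicalAddGroup X] [ContinuousConstSMul 𝕜 X]

variable (𝕜 X Y) in
/-- The predual as a linear map. -/
noncomputable def predualLinearMap :
    (StrongDual 𝕜 X →L[𝕜] StrongDual 𝕜 Y) →ₗ[𝕜] (Y →L[𝕜] X) where
  toFun := predual
  map_add' B C := (eq_predual_iff.mpr fun u y ↦ by simp).symm
  map_smul' a B := (eq_predual_iff.mpr fun u y ↦ by simp).symm

theorem continuous_predual :
    Continuous (predual : (StrongDual 𝕜 X →L[𝕜] StrongDual 𝕜 Y) → (Y →L[𝕜] X)) := by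
  refine continuous_of_continuousAt_zero (predualLinearMap 𝕜 X Y) ?_
  rw [ContinuousAt, map_zero, ContinuousLinearMap.hasBasis_nhds_zero.tendsto_right_iff]
  rintro ⟨s, V⟩ ⟨hs, hV⟩
  obtain ⟨p, hp, r, hr, hpV⟩ := exists_continuous_seminorm_ball_subset (𝕜 := 𝕜) hV
  have hW : ∀ᶠ v : StrongDual 𝕜 Y in 𝓝 0, Set.MapsTo v s (Metric.ball 0 r) :=
    ContinuousLinearMap.eventually_nhds_zero_mapsTo hs (Metric.ball_mem_nhds 0 hr)
  filter_upwards [ContinuousLinearMap.eventually_nhds_zero_mapsTo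
    (isVonNBounded_seminormPolar hp) hW] with B hB y hy
  refine hpV (p.mem_ball_zero.mpr ?_)
  obtain ⟨u, hu, hup⟩ := exists_mem_seminormPolar_norm_apply_eq hp (predual B y)
  calc p (predual B y) = ‖B u y‖ := by rw [← hup, apply_predual]
    _ < r := mem_ball_zero_iff.mp (hB hu hy)

end Predual

section Convergence

lemma tendstoUniformlyOn_of_equicontinuous {ι X Y : Type*} [TopologicalSpace X] [UniformSpace Y]
    {l : Filter ι} {f : ι → X → Y} {g : X → Y} (hf : Equicontinuous f)
    (hfg : ∀ x, Tendsto (fun i ↦ f i x) l (𝓝 (g x))) {K : Set X} (hK : IsCompact K) :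
    TendstoUniformlyOn f g l K := by
  have hlim : Tendsto (UniformOnFun.ofFun {K} ∘ f) l (𝓝 (UniformOnFun.ofFun {K} g)) :=
    (EquicontinuousOn.tendsto_uniformOnFun_iff_pi' (fun _ h ↦ h ▸ hK)
      (fun K _ ↦ hf.equicontinuousOn K) l g).mpr (tendsto_pi_nhds.mpr fun x ↦ hfg x)
  exact UniformOnFun.tendsto_iff_tendstoUniformlyOn.mp hlim K rfl

lemma exists_tendsto_of_forall_norm_le {ι G : Type*} [SeminormedAddCommGroup G] [ProperSpace G]
    (𝓕 : Ultrafilter ι) {f : ι → G} {C : ℝ} (hf : ∀ i, ‖f i‖ ≤ C) :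
    ∃ a, Tendsto f 𝓕 (𝓝 a) := by
  obtain ⟨a, -, ha⟩ := (isCompact_closedBall (0 : G) C).ultrafilter_le_nhds (𝓕.map f) <|
    tendsto_principal.mpr <| .of_forall fun i ↦ mem_closedBall_zero_iff.mpr (hf i)
  exact ⟨a, ha⟩

lemma equicontinuous_iteratedFDeriv {ι 𝕜 E F : Type*} [RCLike 𝕜] [NormedAddCommGroup E]
    [NormedSpace 𝕜 E] [NormedAddCommGroup F] [NormedSpace 𝕜 F] {f : ι → E → F} {n : ℕ} {C : ℝ}
    (hf : ∀ i, ContDiff 𝕜 (n + 1) (f i)) (hC : ∀ i x, ‖iteratedFDeriv 𝕜 (n + 1) (f i) x‖ ≤ C) :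
    Equicontinuous fun i ↦ iteratedFDeriv 𝕜 n (f i) := by
  refine (LipschitzWith.uniformEquicontinuous _ C.toNNReal fun i ↦ ?_).equicontinuous
  refine lipschitzWith_of_nnnorm_fderiv_le (𝕜 := 𝕜)
    ((hf i).differentiable_iteratedFDeriv (by exact_mod_cast n.lt_succ_self)) fun x ↦ ?_
  rw [← norm_toNNReal, norm_fderiv_iteratedFDeriv]
  exact Real.toNNReal_le_toNNReal (hC i x)

lemma hasFTaylorSeriesUpTo_of_tendstoLocallyUniformly {ι 𝕜 E F : Type*} [RCLike 𝕜]
    [NormedAddCommGroup E] [NormedSpace 𝕜 E] [NormedAddCommGroup F] [NormedSpace 𝕜 F]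
    {l : Filter ι} [l.NeBot] {f : ι → E → F} {g : E → FormalMultilinearSeries 𝕜 E F}
    (hf : ∀ i, ContDiff 𝕜 ∞ (f i))
    (hfg : ∀ n, TendstoLocallyUniformly (fun i ↦ iteratedFDeriv 𝕜 n (f i)) (fun x ↦ g x n) l) :
    HasFTaylorSeriesUpTo ∞ (fun x ↦ (g x 0).curry0) g := by
  have hderiv (n : ℕ) (x : E) : HasFDerivAt (fun y ↦ g y n) (g x (n + 1)).curryLeft x := by
    refine hasFDerivAt_of_tendstoLocallyUniformlyOn (𝕜 := 𝕜) (l := l) isOpen_univ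
      (f := fun i ↦ iteratedFDeriv 𝕜 n (f i)) (g' := fun y ↦ (g y (n + 1)).curryLeft)
      (f' := fun i y ↦ (iteratedFDeriv 𝕜 (n + 1) (f i) y).curryLeft)
      ?_ (fun i y _ ↦ ?_) (fun y hy ↦ (hfg n).tendstoLocallyUniformlyOn.tendsto_at hy)
      (Set.mem_univ x)
    · exact (continuousMultilinearCurryLeftEquiv 𝕜 (fun _ : Fin (n + 1) ↦ E)
        F).isometry.uniformContinuous.comp_tendstoLocallyUniformlyOn
          (hfg (n + 1)).tendstoLocallyUniformlyOn
    · have hdiff : Differentiable 𝕜 (iteratedFDeriv 𝕜 n (f i)) :=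
        (hf i).differentiable_iteratedFDeriv (by exact_mod_cast ENat.natCast_lt_top n)
      have h := (hdiff y).hasFDerivAt
      rwa [fderiv_iteratedFDeriv] at h
  exact
    { zero_eq := fun _ ↦ rfl
      fderiv := fun n _ x ↦ hderiv n x
      cont := fun n _ ↦ continuous_iff_continuousAt.mpr fun x ↦ (hderiv n x).continuousAt }

end Convergence

section Schwartz

instance schwartz_polynormableSpace {𝕜 E F : Type*} [NormedField 𝕜] [NormedAddCommGroup E]
    [NormedSpace ℝ E] [NormedAddCommGroup F] [NormedSpace ℝ F] [NormedSpace 𝕜 F]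
    [SMulCommClass ℝ 𝕜 F] : PolynormableSpace 𝕜 𝓢(E, F) :=
  (schwartz_withSeminorms 𝕜 E F).toPolynormableSpace

instance finiteDimensional_continuousMultilinearMap {ι 𝕜 F : Type*} {E : ι → Type*} [Finite ι]
    [Field 𝕜] [TopologicalSpace 𝕜] [∀ i, AddCommGroup (E i)] [∀ i, Module 𝕜 (E i)]
    [∀ i, TopologicalSpace (E i)] [∀ i, FiniteDimensional 𝕜 (E i)] [AddCommGroup F] [Module 𝕜 F]
    [TopologicalSpace F] [IsTopologicalAddGroup F] [ContinuousConstSMul 𝕜 F]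
    [FiniteDimensional 𝕜 F] : FiniteDimensional 𝕜 (ContinuousMultilinearMap 𝕜 E F) :=
  Module.Finite.of_injective
    (ContinuousMultilinearMap.toMultilinearMapLinear :
      ContinuousMultilinearMap 𝕜 E F →ₗ[𝕜] MultilinearMap 𝕜 E F)
    ContinuousMultilinearMap.toMultilinearMap_injective

variable {E F : Type*} [NormedAddCommGroup E] [NormedSpace ℝ E] [NormedAddCommGroup F]
  [NormedSpace ℝ F]

lemma schwartz_seminorm_le_max (k n : ℕ) (f : 𝓢(E, F)) {R δ : ℝ} (hR : 0 < R)
    (hf : ∀ x, ‖x‖ ≤ R → ‖iteratedFDeriv ℝ n f x‖ ≤ δ) :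
    SchwartzMap.seminorm ℝ k n f ≤ max (R ^ k * δ) (SchwartzMap.seminorm ℝ (k + 1) n f / R) := by
  refine SchwartzMap.seminorm_le_bound ℝ k n f (le_max_of_le_right (by positivity)) fun x ↦ ?_
  rcases le_or_gt ‖x‖ R with hx | hx
  · refine le_max_of_le_left ?_
    gcongr
    exact hf x hx
  · refine le_max_of_le_right ((le_div_iff₀ hR).mpr ?_)
    calc ‖x‖ ^ k * ‖iteratedFDeriv ℝ n f x‖ * R
        ≤ ‖x‖ ^ k * ‖iteratedFDeriv ℝ n f x‖ * ‖x‖ := by gcongr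
      _ = ‖x‖ ^ (k + 1) * ‖iteratedFDeriv ℝ n f x‖ := by ring
      _ ≤ SchwartzMap.seminorm ℝ (k + 1) n f := SchwartzMap.le_seminorm ℝ _ _ f x

lemma schwartz_tendsto_of_seminorm_le [ProperSpace E] {ι : Type*} {l : Filter ι}
    {f : ι → 𝓢(E, F)} {g : 𝓢(E, F)} (hbound : ∀ k n, ∃ C, ∀ i, SchwartzMap.seminorm ℝ k n (f i) ≤ C)
    (hlim : ∀ n, TendstoLocallyUniformly (fun i ↦ iteratedFDeriv ℝ n (f i))
      (iteratedFDeriv ℝ n g) l) :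
    Tendsto f l (𝓝 g) := by
  refine ((schwartz_withSeminorms ℝ E F).tendsto_nhds f g).mpr fun ⟨k, n⟩ ε hε ↦ ?_
  obtain ⟨C, hC⟩ := hbound (k + 1) n
  set D := max C 0 + SchwartzMap.seminorm ℝ (k + 1) n g
  have : 0 ≤ D := by positivity
  have hsub (i : ι) : SchwartzMap.seminorm ℝ (k + 1) n (f i - g) ≤ D :=
    (map_sub_le_add _ _ _).trans (add_le_add ((hC i).trans (le_max_left C 0)) le_rfl)
  let R : ℝ := (D + 1) / ε
  have hR : 0 < R := by positivity
  have hunif := tendstoLocallyUniformly_iff_forall_isCompact.mp (hlim n) _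
    (isCompact_closedBall (0 : E) R)
  filter_upwards [Metric.tendstoUniformlyOn_iff.mp hunif (ε / (2 * R ^ k)) (by positivity)]
    with i hi
  have hball (x : E) (hx : ‖x‖ ≤ R) :
      ‖iteratedFDeriv ℝ n (f i - g : 𝓢(E, F)) x‖ ≤ ε / (2 * R ^ k) := by
    have heq : iteratedFDeriv ℝ n (f i - g : 𝓢(E, F)) x
        = iteratedFDeriv ℝ n (f i) x - iteratedFDeriv ℝ n g x :=
      iteratedFDeriv_sub_apply ((f i).contDiffAt n) (g.contDiffAt n)
    rw [heq, ← dist_eq_norm, dist_comm]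
    exact (hi x (mem_closedBall_zero_iff.mpr hx)).le
  calc SchwartzMap.seminorm ℝ k n (f i - g)
      ≤ max (R ^ k * (ε / (2 * R ^ k))) (SchwartzMap.seminorm ℝ (k + 1) n (f i - g) / R) :=
        schwartz_seminorm_le_max k n (f i - g) hR hball
    _ ≤ max (ε / 2) (D / R) := by
        gcongr
        · exact (by field_simp : R ^ k * (ε / (2 * R ^ k)) = ε / 2).le
        · exact hsub i
    _ < ε := max_lt (half_lt_self hε) (by
        rw [div_lt_iff₀ hR, mul_div_cancel₀ _ hε.ne']
        exact lt_add_one D)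

variable [FiniteDimensional ℝ E] [FiniteDimensional ℝ F]

theorem exists_tendsto_of_forall_schwartz_seminorm_le {ι : Type*} (𝓕 : Ultrafilter ι)
    {f : ι → 𝓢(E, F)} (hbound : ∀ k n, ∃ C, ∀ i, SchwartzMap.seminorm ℝ k n (f i) ≤ C) :
    ∃ g, Tendsto f 𝓕 (𝓝 g) := by
  choose C hC using hbound
  have hle (i : ι) (k n : ℕ) (x : E) : ‖x‖ ^ k * ‖iteratedFDeriv ℝ n (f i) x‖ ≤ C k n :=
    (SchwartzMap.le_seminorm ℝ k n (f i) x).trans (hC k n i)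
  have hle₀ (n : ℕ) (i : ι) (x : E) : ‖iteratedFDeriv ℝ n (f i) x‖ ≤ C 0 n := by
    simpa using hle i 0 n x
  have : ProperSpace E := FiniteDimensional.proper ℝ E
  have (n : ℕ) : ProperSpace (E [×n]→L[ℝ] F) := FiniteDimensional.proper ℝ _
  choose G hG using fun x n ↦ exists_tendsto_of_forall_norm_le 𝓕 fun i ↦ hle₀ n i x
  have hlim (n : ℕ) :
      TendstoLocallyUniformly (fun i ↦ iteratedFDeriv ℝ n (f i)) (fun x ↦ G x n) 𝓕 :=
    tendstoLocallyUniformly_iff_forall_isCompact.mpr fun K hK ↦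
      tendstoUniformlyOn_of_equicontinuous
        (equicontinuous_iteratedFDeriv (fun i ↦ (f i).smooth _) (hle₀ (n + 1)))
        (fun x ↦ hG x n) hK
  have htaylor : HasFTaylorSeriesUpTo ∞ (fun x ↦ (G x 0).curry0) G :=
    hasFTaylorSeriesUpTo_of_tendstoLocallyUniformly (fun i ↦ (f i).smooth ⊤) hlim
  have hderiv (n : ℕ) : (fun x ↦ G x n) = iteratedFDeriv ℝ n fun x ↦ (G x 0).curry0 :=
    funext fun x ↦ htaylor.eq_iteratedFDeriv (by exact_mod_cast le_top) x
  let g : 𝓢(E, F) :=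
    { toFun := fun x ↦ (G x 0).curry0
      smooth' := htaylor.contDiff
      decay' := fun k n ↦ ⟨C k n, fun x ↦ by
        rw [← hderiv]
        exact le_of_tendsto ((hG x n).norm.const_mul _) (.of_forall fun i ↦ hle i k n x)⟩ }
  exact ⟨g, schwartz_tendsto_of_seminorm_le (fun k n ↦ ⟨C k n, hC k n⟩)
    fun n ↦ (hderiv n ▸ hlim n :)⟩

instance schwartz_montelSpace {𝕜 : Type*} [NontriviallyNormedField 𝕜] [NormedSpace 𝕜 F]
    [SMulCommClass ℝ 𝕜 F] : MontelSpace 𝕜 𝓢(E, F) where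
  heine_borel s hclosed hbdd := by
    have hbound (k n : ℕ) : ∃ C, ∀ f : s, SchwartzMap.seminorm ℝ k n (f : 𝓢(E, F)) ≤ C := by
      obtain ⟨C, -, hC⟩ :=
        (schwartz_withSeminorms 𝕜 E F).isVonNBounded_iff_seminorm_bounded.mp hbdd (k, n)
      exact ⟨C, fun f ↦ (hC f f.2).le⟩
    refine isCompact_iff_compactSpace.mpr ⟨isCompact_iff_ultrafilter_le_nhds.mpr fun 𝓕 _ ↦ ?_⟩
    obtain ⟨g, hg⟩ := exists_tendsto_of_forall_schwartz_seminorm_le 𝓕 hbound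
    have hgs : g ∈ s := hclosed.mem_of_tendsto hg (.of_forall Subtype.property)
    exact ⟨⟨g, hgs⟩, Set.mem_univ _, tendsto_subtype_rng.mpr hg⟩

end Schwartz

section Conjugation

variable {𝕜 E : Type*} [RCLike 𝕜] [NormedAddCommGroup E] [NormedSpace ℝ E]

lemma norm_iteratedFDeriv_conj (f : E → 𝕜) (n : ℕ) (x : E) :
    ‖iteratedFDeriv ℝ n (fun y ↦ starRingEnd 𝕜 (f y)) x‖ = ‖iteratedFDeriv ℝ n f x‖ :=
  (RCLike.conjLIE (K := 𝕜)).norm_iteratedFDeriv_comp_left f x n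

variable (𝕜 E) in
/-- Pointwise complex conjugation on `𝓢(E, 𝕜)`, as a continuous conjugate-linear map. -/
noncomputable def schwartzConjCLM : 𝓢(E, 𝕜) →L⋆[𝕜] 𝓢(E, 𝕜) :=
  mkCLM (fun f x ↦ starRingEnd 𝕜 (f x))
    (fun f g x ↦ map_add (starRingEnd 𝕜) (f x) (g x))
    (fun a f x ↦ map_mul (starRingEnd 𝕜) a (f x))
    (fun f ↦ RCLike.conjCLE (K := 𝕜).contDiff.comp (f.smooth ⊤))
    (fun ⟨k, n⟩ ↦ ⟨{(k, n)}, 1, zero_le_one, fun f x ↦ by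
      rw [norm_iteratedFDeriv_conj, one_mul, Finset.sup_singleton]
      exact SchwartzMap.le_seminorm 𝕜 k n f x⟩)

lemma schwartzConjCLM_involutive : Function.Involutive (schwartzConjCLM 𝕜 E) :=
  fun f ↦ SchwartzMap.ext fun x ↦ RCLike.conj_conj (f x)

variable (𝕜 E) in
/-- Pointwise complex conjugation on `𝓢(E, 𝕜)`, as a conjugate-linear homeomorphism. -/
noncomputable def schwartzConj : 𝓢(E, 𝕜) ≃L⋆[𝕜] 𝓢(E, 𝕜) :=
  .equivOfInverse (schwartzConjCLM 𝕜 E) (schwartzConjCLM 𝕜 E) schwartzConjCLM_involutive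
    schwartzConjCLM_involutive

@[simp]
lemma schwartzConj_apply (f : 𝓢(E, 𝕜)) (x : E) :
    schwartzConj 𝕜 E f x = starRingEnd 𝕜 (f x) :=
  rfl

lemma schwartzConj_schwartzConj (f : 𝓢(E, 𝕜)) :
    schwartzConj 𝕜 E (schwartzConj 𝕜 E f) = f :=
  schwartzConjCLM_involutive f

lemma schwartzConj_symm : (schwartzConj 𝕜 E).symm = schwartzConj 𝕜 E := rfl

end Conjugation

section Adjoint

variable {𝕜 E : Type*} [RCLike 𝕜] [NormedAddCommGroup E] [NormedSpace ℝ E] [FiniteDimensional ℝ E]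

/-- The operator `B*` on `𝓢(E, 𝕜)` attached to an operator `B` on tempered distributions: the
predual of `B`, conjugated by complex conjugation. -/
noncomputable def distOpAdjoint (B : StrongDual 𝕜 𝓢(E, 𝕜) →L[𝕜] StrongDual 𝕜 𝓢(E, 𝕜)) :
    𝓢(E, 𝕜) →L[𝕜] 𝓢(E, 𝕜) :=
  (schwartzConj 𝕜 E).arrowCongrSL (schwartzConj 𝕜 E) (predual B)

lemma eq_distOpAdjoint_iff {B : StrongDual 𝕜 𝓢(E, 𝕜) →L[𝕜] StrongDual 𝕜 𝓢(E, 𝕜)}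
    {A : 𝓢(E, 𝕜) →L[𝕜] 𝓢(E, 𝕜)} :
    A = distOpAdjoint B ↔ ∀ g u, u (schwartzConj 𝕜 E (A g)) = B u (schwartzConj 𝕜 E g) := by
  rw [distOpAdjoint, ← ContinuousLinearEquiv.symm_apply_eq, eq_predual_iff, forall_comm,
    (schwartzConj 𝕜 E).surjective.forall]
  simp only [ContinuousLinearEquiv.arrowCongrSL_symm_apply, ContinuousLinearMap.comp_apply,
    schwartzConj_symm, ContinuousLinearEquiv.coe_coe, schwartzConj_schwartzConj]

theorem continuous_distOpAdjoint : Continuous (distOpAdjoint (𝕜 := 𝕜) (E := E)) :=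
  (ContinuousLinearEquiv.arrowCongrSL _ _).continuous.comp continuous_predual

theorem adjoint_of_distOp_exists_unique_continuous_general :
    (∀ B : StrongDual 𝕜 𝓢(E, 𝕜) →L[𝕜] StrongDual 𝕜 𝓢(E, 𝕜), ∃! A : 𝓢(E, 𝕜) →L[𝕜] 𝓢(E, 𝕜),
      ∀ g u, u (schwartzConj 𝕜 E (A g)) = B u (schwartzConj 𝕜 E g)) ∧
    ∃ adj : (StrongDual 𝕜 𝓢(E, 𝕜) →L[𝕜] StrongDual 𝕜 𝓢(E, 𝕜)) → (𝓢(E, 𝕜) →L[𝕜] 𝓢(E, 𝕜)),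
      Continuous adj ∧
        ∀ (B : StrongDual 𝕜 𝓢(E, 𝕜) →L[𝕜] StrongDual 𝕜 𝓢(E, 𝕜)) g u,
          u (schwartzConj 𝕜 E (adj B g)) = B u (schwartzConj 𝕜 E g) := by
  refine ⟨fun B ↦ ?_, distOpAdjoint, continuous_distOpAdjoint, fun B ↦ eq_distOpAdjoint_iff.mp rfl⟩
  simp only [← eq_distOpAdjoint_iff, existsUnique_eq]

end Adjoint

section Euclidean

variable {n : ℕ}

lemma isConjOf_iff_eq_schwartzConj {f fc : 𝓢(Fin n → ℝ, ℂ)} :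
    IsConjOf f fc ↔ fc = schwartzConj ℂ (Fin n → ℝ) f := by
  simp only [SchwartzMap.ext_iff, IsConjOf, schwartzConj_apply]

lemma isAdjointOfDistOp_iff {B : TemperedDist n →L[ℂ] TemperedDist n}
    {A : 𝓢(Fin n → ℝ, ℂ) →L[ℂ] 𝓢(Fin n → ℝ, ℂ)} :
    IsAdjointOfDistOp B A ↔ ∀ g u,
      u (schwartzConj ℂ (Fin n → ℝ) (A g)) = B u (schwartzConj ℂ (Fin n → ℝ) g) := by
  simp only [IsAdjointOfDistOp, isConjOf_iff_eq_schwartzConj, forall_eq, forall_eq_apply_imp_iff]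

end Euclidean

/-- Every continuous linear map `B : 𝓢'(ℝ^k) → 𝓢'(ℝ^k)` (strong topologies) has a unique
adjoint `B* : 𝓢(ℝ^k) → 𝓢(ℝ^k)` satisfying `u (conj (B* g)) = (B u)(conj g)` for all `g, u`;
moreover `B ↦ B*` is continuous from `L(𝓢'(ℝ^k), 𝓢'(ℝ^k))` to `L(𝓢(ℝ^k), 𝓢(ℝ^k))`, both
spaces carrying the topology of uniform convergence on bounded sets. -/
theorem adjoint_of_distOp_exists_unique_continuous (k : ℕ) :
    (∀ B : TemperedDist k →L[ℂ] TemperedDist k,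
      ∃! Bstar : SchwartzMap (Fin k → ℝ) ℂ →L[ℂ] SchwartzMap (Fin k → ℝ) ℂ,
        IsAdjointOfDistOp B Bstar) ∧
    (∃ adj : (TemperedDist k →L[ℂ] TemperedDist k) →
        (SchwartzMap (Fin k → ℝ) ℂ →L[ℂ] SchwartzMap (Fin k → ℝ) ℂ),
      Continuous adj ∧ ∀ B, IsAdjointOfDistOp B (adj B)) := by
  simpa only [isAdjointOfDistOp_iff] using
    adjoint_of_distOp_exists_unique_continuous_general (𝕜 := ℂ) (E := Fin k → ℝ)
end
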